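/- arXiv:math/0306246 — 4 statements merged into one kernel-verified Lean document; each statement's English description precedes it below -/
import Mathlib

section
/- Let n : ℕ → ℕ be a function. For each d, let X_{d,n(d)} be an n(d)-element subset of {0,1}^d chosen uniformly at random, let P_{d,n(d)} := conv(X_{d,n(d)}) be its convex hull, and let Δ_{d,n(d)} be the density of the graph of P_{d,n(d)}. If there exists ε > 0 such that n(d) ≥ (√2 + ε)^d for all sufficiently large d, then lim_{d→∞} E[Δ_{d,n(d)}] = 0. -/
open Finset Filter MeasureTheory

open scoped Classical

noncomputable section

/-- The vertex set `{0,1}^d` of the 0/1-cube, as a finite subset of `ℝ^d`. -/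
def cube01 (d : ℕ) : Finset (Fin d → ℝ) :=
  (Finset.univ : Finset (Fin d → Bool)).image (fun f i => if f i then 1 else 0)

/-- The vertex set `{-1,+1}^d` of the `±1`-cube, as a finite subset of `ℝ^d`. -/
def pmCube (d : ℕ) : Finset (Fin d → ℝ) :=
  (Finset.univ : Finset (Fin d → Bool)).image (fun f i => if f i then 1 else -1)

/-- The all-one vector `𝟙 ∈ ℝ^d`. -/
def allOne (d : ℕ) : Fin d → ℝ := fun _ => 1

/-- `C^d_* = {-1,+1}^d \ {-𝟙, 𝟙}`. -/
def pmCubeStar (d : ℕ) : Finset (Fin d → ℝ) :=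
  (pmCube d) \ {-(allOne d), allOne d}

/-- `{v,w}` spans an edge (a one-dimensional face) of the polytope `P`:
`v ≠ w` and the segment `[v,w]` is an (exposed) face of `P`. -/
def IsEdge {d : ℕ} (P : Set (Fin d → ℝ)) (v w : Fin d → ℝ) : Prop :=
  v ≠ w ∧ IsExposed ℝ P (segment ℝ v w)

/-- The number of edges of the graph of the polytope `conv X`. -/
noncomputable def edgeCount {d : ℕ} (X : Finset (Fin d → ℝ)) : ℕ :=
  ((X.powersetCard 2).filter (fun e =>
      ∃ v w, e = {v, w} ∧ IsEdge (convexHull ℝ (X : Set (Fin d → ℝ))) v w)).card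

/-- The density of the graph of the polytope `conv X` (whose vertex set is `X`
when `X` consists of 0/1- or `±1`-points): number of edges divided by `C(|X|,2)`. -/
noncomputable def graphDensity {d : ℕ} (X : Finset (Fin d → ℝ)) : ℝ :=
  (edgeCount X : ℝ) / (X.card.choose 2 : ℝ)

/-- The expected graph-density of the convex hull of a uniformly random
`n`-element subset of `{0,1}^d`. -/
noncomputable def expDensity (d n : ℕ) : ℝ :=
  (∑ X ∈ (cube01 d).powersetCard n, graphDensity X) /
    (((cube01 d).powersetCard n).card : ℝ)

/-- The Hamming distance of `v, w ∈ ℝ^d`. -/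
def hdist {d : ℕ} (v w : Fin d → ℝ) : ℕ :=
  (Finset.univ.filter (fun i => v i ≠ w i)).card

/-- `C(v,w)`: the points of the `±1`-cube agreeing with `v` and `w` wherever these agree
(the vertex set of the smallest face of the cube containing `v` and `w`). -/
def cubeFace {d : ℕ} (v w : Fin d → ℝ) : Finset (Fin d → ℝ) :=
  (pmCube d).filter (fun x => ∀ i, v i = w i → x i = v i)

/-- `C_*(v,w) = C(v,w) \ {v,w}`. -/
def cubeFaceStar {d : ℕ} (v w : Fin d → ℝ) : Finset (Fin d → ℝ) :=
  (cubeFace v w) \ {v, w}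

/-- The long-edge probability `τ(k,m)`: the probability that for a uniformly random
`m`-element subset `Y ⊆ C^k_*`, `conv Y ∩ conv{-𝟙,𝟙} = ∅`. -/
noncomputable def tau (k m : ℕ) : ℝ :=
  ((((pmCubeStar k).powersetCard m).filter (fun Y =>
      convexHull ℝ (Y : Set (Fin k → ℝ)) ∩ segment ℝ (-(allOne k)) (allOne k) = ∅)).card : ℝ) /
    ((((pmCubeStar k).powersetCard m)).card : ℝ)

/-- `Y ∩ (-Y) = ∅`. -/
def NoAntipodal {k : ℕ} (Y : Finset (Fin k → ℝ)) : Prop := ∀ y ∈ Y, -y ∉ Y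

/-- `α(k,m)`: the conditional probability that `conv Y ∩ conv{-𝟙,𝟙} = ∅`
given `Y ∩ (-Y) = ∅`, for a uniformly random `m`-element subset `Y ⊆ C^k_*`. -/
noncomputable def alpha (k m : ℕ) : ℝ :=
  ((((pmCubeStar k).powersetCard m).filter (fun (Y : Finset (Fin k → ℝ)) =>
      convexHull ℝ (Y : Set (Fin k → ℝ)) ∩ segment ℝ (-(allOne k)) (allOne k) = ∅ ∧
        NoAntipodal Y)).card : ℝ) /
    ((((pmCubeStar k).powersetCard m).filter (fun Y => NoAntipodal Y)).card : ℝ)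

/-- The sample space for a uniformly random `n`-element subset `X ⊆ {-1,+1}^d`
together with a uniformly random `2`-element subset `{v,w} ⊆ X`. -/
def edgeSpace (d n : ℕ) : Finset (Finset (Fin d → ℝ) × Finset (Fin d → ℝ)) :=
  (((pmCube d).powersetCard n) ×ˢ ((pmCube d).powersetCard 2)).filter (fun p => p.2 ⊆ p.1)

/-- The event that the chosen pair `{v,w}` is an edge of `conv X`. -/
def EdgeEvent {d : ℕ} (p : Finset (Fin d → ℝ) × Finset (Fin d → ℝ)) : Prop :=
  ∃ v w, p.2 = {v, w} ∧ IsEdge (convexHull ℝ (p.1 : Set (Fin d → ℝ))) v w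

/-- The event that the chosen pair `{v,w}` satisfies `dist(v,w) = k`. -/
def DistEvent {d : ℕ} (k : ℕ) (p : Finset (Fin d → ℝ) × Finset (Fin d → ℝ)) : Prop :=
  ∃ v w, v ≠ w ∧ p.2 = {v, w} ∧ hdist v w = k

/-- The event that the chosen pair `{v,w}` satisfies `dist(v,w) = k` and
`#(X ∩ C_*(v,w)) = m`. -/
def DistCapEvent {d : ℕ} (k m : ℕ) (p : Finset (Fin d → ℝ) × Finset (Fin d → ℝ)) : Prop :=
  ∃ v w, v ≠ w ∧ p.2 = {v, w} ∧ hdist v w = k ∧ (p.1 ∩ cubeFaceStar v w).card = m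

/-- The edge probability `π(d,n)`. -/
noncomputable def piEdge (d n : ℕ) : ℝ :=
  (((edgeSpace d n).filter (fun p => EdgeEvent p)).card : ℝ) / ((edgeSpace d n).card : ℝ)

/-- The conditional edge probability `π_k(d,n)` given `dist(v,w) = k`. -/
noncomputable def piEdgeK (d n k : ℕ) : ℝ :=
  (((edgeSpace d n).filter (fun p => EdgeEvent p ∧ DistEvent k p)).card : ℝ) /
    (((edgeSpace d n).filter (fun p => DistEvent k p)).card : ℝ)

/-- `φ : ℝ^{r+1} → ℝ^r`: the orthogonal projection onto the hyperplane
`H_𝟙 = {x : 𝟙ᵀx = 0}` (namely `x ↦ x - ((𝟙ᵀx)/(r+1))·𝟙`), followed by the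
projection to the first `r` coordinates. -/
noncomputable def phi (r : ℕ) (x : Fin (r + 1) → ℝ) : Fin r → ℝ :=
  fun i => x i.castSucc - (∑ j, x j) / (r + 1 : ℝ)

/-- The vector configuration `V_r = φ(C^{r+1}_*)`. -/
noncomputable def Vr (r : ℕ) : Finset (Fin r → ℝ) := (pmCubeStar (r + 1)).image (phi r)

/-- The half configuration `V_r^+ = φ({v ∈ C^{r+1}_* : v_{r+1} = +1})`. -/
noncomputable def VrPlus (r : ℕ) : Finset (Fin r → ℝ) :=
  (((pmCubeStar (r + 1)).filter (fun v => v (Fin.last r) = 1))).image (phi r)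

/-- The number of sign vectors `ε ∈ {-1,+1}^S` with `0 ∉ conv{ε_s · s : s ∈ S}`. -/
noncomputable def signCount {r : ℕ} (S : Finset (Fin r → ℝ)) : ℕ :=
  ((Finset.univ : Finset (↥S → Bool)).filter (fun ε =>
      (0 : Fin r → ℝ) ∉ convexHull ℝ
        (Set.range fun s : ↥S => (if ε s then (1 : ℝ) else -1) • (s : Fin r → ℝ)))).card

/-- `α(S)`: the probability that `0 ∉ conv{ε_s · s : s ∈ S}` for a uniformly random
sign vector `ε ∈ {-1,+1}^S`. -/
noncomputable def alphaSet {r : ℕ} (S : Finset (Fin r → ℝ)) : ℝ :=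
  (signCount S : ℝ) / ((Finset.univ : Finset (↥S → Bool)).card : ℝ)

/-- The complement `ℝ^r \ ⋃_{s ∈ S} H(s)` of the hyperplane arrangement `ℋ(S)`. -/
def arrComplement {r : ℕ} (S : Finset (Fin r → ℝ)) : Set (Fin r → ℝ) :=
  {x | ∀ s ∈ S, ∑ i, s i * x i ≠ 0}

/-- `χ(S)`: the number of chambers (connected components of the complement)
of the hyperplane arrangement `ℋ(S)`. -/
noncomputable def chi {r : ℕ} (S : Finset (Fin r → ℝ)) : ℕ :=
  Nat.card (ConnectedComponents ↥(arrComplement S))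

/-- `b(p,q) = ∑_{i=0}^p C(q,i)`. -/
def bFn (p q : ℕ) : ℕ := ∑ i ∈ Finset.range (p + 1), q.choose i

/-!
A functional exposing an edge `[v, w]` of `conv X` cuts out a closed half-space containing `v` and
`w` in its boundary and no other point of `X`. The smallest face of the cube containing `v` and `w`
is symmetric about the midpoint of `[v, w]`, so this half-space contains at least half of its
`2 ^ k` vertices, where `k = dist(v, w)`; all of these, except `v` and `w`, are missed by `X`.
Half-spaces shatter no set of `d + 2` points (Radon), hence by Sauer–Shelah they cut the cube in
only `2 ^ O(d ^ 2)` ways, and a union bound over these ways shows that `{v, w} ⊆ X` is an edge with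
conditional probability at most `2 ^ O(d ^ 2) * exp (-Ω(2 ^ k * n / 2 ^ d))`.
By Chebyshev's inequality `k ≥ s * d` for almost all pairs as soon as `s < 1 / 2`, and if
`n ≥ (√2 + ε) ^ d` then `2 ^ (s * d) * n / 2 ^ d` grows exponentially for `s` close to `1 / 2`.
-/

/-! ### Random subsets of a finite set -/

lemma descFactorial_mul_pow_le {q m : ℕ} (hqm : q ≤ m) (r : ℕ) :
    q.descFactorial r * m ^ r ≤ m.descFactorial r * q ^ r := by
  induction r with
  | zero => simp
  | succ r ih =>
    have hstep : (q - r) * m ≤ (m - r) * q := by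
      rw [Nat.sub_mul, Nat.sub_mul, mul_comm m q]
      exact Nat.sub_le_sub_left (Nat.mul_le_mul_left _ hqm) _
    calc q.descFactorial (r + 1) * m ^ (r + 1)
        = (q.descFactorial r * m ^ r) * ((q - r) * m) := by
          rw [Nat.descFactorial_succ, pow_succ]; ring
      _ ≤ (m.descFactorial r * q ^ r) * ((m - r) * q) := Nat.mul_le_mul ih hstep
      _ = m.descFactorial (r + 1) * q ^ (r + 1) := by
          rw [Nat.descFactorial_succ, pow_succ]; ring

lemma choose_mul_pow_le {q m : ℕ} (hqm : q ≤ m) (r : ℕ) :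
    q.choose r * m ^ r ≤ m.choose r * q ^ r := by
  refine Nat.le_of_mul_le_mul_left ?_ r.factorial_pos
  simpa only [← mul_assoc, ← Nat.descFactorial_eq_factorial_mul_choose]
    using descFactorial_mul_pow_le hqm r

lemma choose_sub_le_choose_mul_exp {m b : ℕ} (hm : 0 < m) (hb : b ≤ m) (r : ℕ) :
    ((m - b).choose r : ℝ) ≤ m.choose r * Real.exp (-(b * r / m)) := by
  have hm' : (0 : ℝ) < m := mod_cast hm
  have hratio : ((m - b : ℕ) : ℝ) / m ≤ Real.exp (-(b / m)) := by
    rw [Nat.cast_sub hb, sub_div, div_self hm'.ne']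
    exact Real.one_sub_le_exp_neg _
  calc ((m - b).choose r : ℝ)
      ≤ m.choose r * (m - b : ℕ) ^ r / m ^ r := by
        rw [le_div_iff₀ (by positivity)]
        exact_mod_cast choose_mul_pow_le (Nat.sub_le m b) r
    _ = m.choose r * (((m - b : ℕ) : ℝ) / m) ^ r := by rw [div_pow, mul_div_assoc]
    _ ≤ m.choose r * Real.exp (-(b / m)) ^ r := by gcongr
    _ = m.choose r * Real.exp (-(b * r / m)) := by rw [← Real.exp_nat_mul]; ring_nf

section RandomSubset

variable {α : Type*} [DecidableEq α] {C e B : Finset α}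

lemma card_filter_subset_and_disjoint_le (he : e ⊆ C) (hB : B ⊆ C) (heB : Disjoint e B) (n : ℕ) :
    #{X ∈ C.powersetCard n | e ⊆ X ∧ Disjoint X B} ≤ (#C - #e - #B).choose (n - #e) := by
  have hcard : #(C \ (e ∪ B)) = #C - #e - #B := by
    rw [card_sdiff_of_subset (union_subset he hB), card_union_of_disjoint heB, Nat.sub_add_eq]
  rw [← hcard, ← card_powersetCard]
  refine card_le_card_of_injOn (· \ e) (fun X hX ↦ ?_) (fun X hX Y hY hXY ↦ ?_)
  · obtain ⟨hXC, heX, hXB⟩ := mem_filter.1 hX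
    obtain ⟨hXC, hXn⟩ := mem_powersetCard.1 hXC
    refine mem_powersetCard.2 ⟨?_, by rw [card_sdiff_of_subset heX, hXn]⟩
    intro x hx
    obtain ⟨hxX, hxe⟩ := mem_sdiff.1 hx
    exact mem_sdiff.2 ⟨hXC hxX, notMem_union.2 ⟨hxe, disjoint_left.1 hXB hxX⟩⟩
  · rw [← sdiff_union_of_subset (mem_filter.1 hX).2.1,
      ← sdiff_union_of_subset (mem_filter.1 hY).2.1]
    exact congrArg (· ∪ e) hXY

lemma card_filter_subset_and_disjoint_le_exp (he : e ⊆ C) (hB : B ⊆ C) (heB : Disjoint e B)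
    (n : ℕ) :
    (#{X ∈ C.powersetCard n | e ⊆ X ∧ Disjoint X B} : ℝ) ≤
      (#C - #e).choose (n - #e) * Real.exp (-(#B * (n - #e : ℕ) / #C)) := by
  have hcount := card_filter_subset_and_disjoint_le he hB heB n
  have hBle : #B ≤ #C - #e := by
    have := card_le_card (union_subset he hB)
    rw [card_union_of_disjoint heB] at this
    omega
  obtain hm | hm := (#C - #e).eq_zero_or_pos
  · have hB0 : #B = 0 := by omega
    simpa only [hB0, Nat.sub_zero, Nat.cast_zero, zero_mul, zero_div, neg_zero, Real.exp_zero,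
      mul_one, Nat.cast_le] using hcount
  calc (#{X ∈ C.powersetCard n | e ⊆ X ∧ Disjoint X B} : ℝ)
      ≤ (#C - #e - #B).choose (n - #e) := mod_cast hcount
    _ ≤ (#C - #e).choose (n - #e) * Real.exp (-(#B * (n - #e : ℕ) / (#C - #e : ℕ))) :=
        choose_sub_le_choose_mul_exp hm hBle _
    _ ≤ (#C - #e).choose (n - #e) * Real.exp (-(#B * (n - #e : ℕ) / #C)) := by
        gcongr
        exact Nat.sub_le _ _

end RandomSubset

lemma sum_powerset_sq_half_sub_card {α : Type*} (s : Finset α) :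
    ∑ D ∈ s.powerset, ((#s : ℝ) / 2 - #D) ^ 2 = (#s : ℝ) * 2 ^ #s / 4 := by
  induction s using Finset.induction_on with
  | empty => simp
  | insert a s ha ih =>
    have hpair : ∀ D ∈ s.powerset,
        ((#(insert a s) : ℝ) / 2 - #D) ^ 2 + ((#(insert a s) : ℝ) / 2 - #(insert a D)) ^ 2 =
          2 * ((#s : ℝ) / 2 - #D) ^ 2 + 1 / 2 := fun D hD ↦ by
      rw [card_insert_of_notMem ha, card_insert_of_notMem fun h ↦ ha (mem_powerset.1 hD h)]
      push_cast
      ring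
    rw [sum_powerset_insert ha, ← sum_add_distrib, sum_congr rfl hpair, sum_add_distrib,
      ← mul_sum, ih, sum_const, card_powerset, card_insert_of_notMem ha, nsmul_eq_mul]
    push_cast
    ring

lemma card_powerset_filter_card_lt_mul_sq_le {α : Type*} (s : Finset α) {t : ℝ} (ht : 0 ≤ t) :
    (#{D ∈ s.powerset | (#D : ℝ) < #s / 2 - t} : ℝ) * t ^ 2 ≤ (#s : ℝ) * 2 ^ #s / 4 := by
  rw [← sum_powerset_sq_half_sub_card, ← nsmul_eq_mul]
  calc _ ≤ ∑ D ∈ s.powerset with (#D : ℝ) < #s / 2 - t, ((#s : ℝ) / 2 - #D) ^ 2 := by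
        refine card_nsmul_le_sum _ _ _ fun D hD ↦ pow_le_pow_left₀ ht ?_ 2
        linarith [(mem_filter.1 hD).2]
    _ ≤ ∑ D ∈ s.powerset, ((#s : ℝ) / 2 - #D) ^ 2 :=
        sum_le_sum_of_subset_of_nonneg (filter_subset _ _) fun _ _ _ ↦ sq_nonneg _

/-! ### Half-spaces and finite point sets -/

section HalfspaceTraces

variable (𝕜 : Type*) {E : Type*} [Field 𝕜] [LinearOrder 𝕜] [AddCommGroup E] [Module 𝕜 E]

/-- The traces on a finite set `C` of the closed half-spaces `{x | b ≤ l x}`. The functional `l` may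
be zero, so `∅` and `C` itself are traces. -/
def halfspaceTraces (C : Finset E) : Finset (Finset E) :=
  {T ∈ C.powerset | ∃ (l : E →ₗ[𝕜] 𝕜) (b : 𝕜), ∀ x, x ∈ T ↔ x ∈ C ∧ b ≤ l x}

variable {𝕜}

lemma mem_halfspaceTraces {C T : Finset E} :
    T ∈ halfspaceTraces 𝕜 C ↔ ∃ (l : E →ₗ[𝕜] 𝕜) (b : 𝕜), ∀ x, x ∈ T ↔ x ∈ C ∧ b ≤ l x := by
  refine ⟨fun hT ↦ (mem_filter.1 hT).2, fun ⟨l, b, hT⟩ ↦ mem_filter.2 ⟨?_, l, b, hT⟩⟩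
  exact mem_powerset.2 fun x hx ↦ ((hT x).1 hx).1

variable {C s : Finset E}

lemma subset_of_shatters_halfspaceTraces (hs : (halfspaceTraces 𝕜 C).Shatters s) : s ⊆ C := by
  obtain ⟨T, hT, hsT⟩ := hs.exists_superset
  exact hsT.trans (mem_powerset.1 (mem_filter.1 hT).1)

variable [IsStrictOrderedRing 𝕜]

lemma card_le_two_mul_card_filter_le_map {F : Finset E} {c : E} (hF : ∀ x ∈ F, c - x ∈ F)
    {l : E →ₗ[𝕜] 𝕜} {b : 𝕜} (hb : 2 * b ≤ l c) : #F ≤ 2 * #{x ∈ F | b ≤ l x} := by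
  have hreflect : #{x ∈ F | ¬ b ≤ l x} ≤ #{x ∈ F | b ≤ l x} := by
    refine card_le_card_of_injOn (c - ·) (fun x hx ↦ ?_) (sub_right_injective.injOn)
    obtain ⟨hxF, hxb⟩ := mem_filter.1 hx
    refine mem_filter.2 ⟨hF x hxF, ?_⟩
    rw [map_sub]
    linarith
  rw [← card_filter_add_card_filter_not (s := F) (b ≤ l ·)]
  omega

lemma affineIndependent_of_shatters_halfspaceTraces (hs : (halfspaceTraces 𝕜 C).Shatters s) :
    AffineIndependent 𝕜 ((↑) : s → E) := by
  by_contra hdep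
  obtain ⟨I, z, hzI, hzIc⟩ := Convex.radon_partition hdep
  obtain ⟨T, hT, hsT⟩ := hs (t := {x ∈ s | x ∈ ((↑) : s → E) '' I}) (filter_subset _ _)
  obtain ⟨l, b, hlb⟩ := mem_halfspaceTraces.1 hT
  have hmem : ∀ x : s, x ∈ I ↔ b ≤ l x := fun x ↦ by
    have := congrArg ((x : E) ∈ ·) hsT
    simpa [hlb, subset_of_shatters_halfspaceTraces hs x.2, eq_comm] using this
  have hle : b ≤ l z := by
    refine convexHull_min (t := {x | b ≤ l x}) ?_ (convex_halfSpace_ge l.isLinear b) hzI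
    rintro _ ⟨x, hx, rfl⟩
    exact (hmem x).1 hx
  have hlt : l z < b := by
    refine convexHull_min (t := {x | l x < b}) ?_ (convex_halfSpace_lt l.isLinear b) hzIc
    rintro _ ⟨x, hx, rfl⟩
    exact not_le.1 (mt (hmem x).2 hx)
  exact hlt.not_ge hle

variable [FiniteDimensional 𝕜 E]

lemma card_le_of_shatters_halfspaceTraces (hs : (halfspaceTraces 𝕜 C).Shatters s) :
    #s ≤ Module.finrank 𝕜 E + 1 := by
  have := (affineIndependent_of_shatters_halfspaceTraces hs).card_le_finrank_succ
  rw [Fintype.card_coe] at this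
  exact this.trans (Nat.succ_le_succ (Submodule.finrank_le _))

lemma card_halfspaceTraces_le (C : Finset E) :
    #(halfspaceTraces 𝕜 C) ≤ ∑ k ∈ range (Module.finrank 𝕜 E + 2), (#C).choose k := by
  have hsub : (halfspaceTraces 𝕜 C).shatterer ⊆
      (range (Module.finrank 𝕜 E + 2)).biUnion C.powersetCard := fun s hs ↦ by
    rw [mem_shatterer] at hs
    refine mem_biUnion.2 ⟨#s, ?_, ?_⟩
    · exact mem_range.2 (Nat.lt_succ_of_le (card_le_of_shatters_halfspaceTraces hs))
    · exact mem_powersetCard.2 ⟨subset_of_shatters_halfspaceTraces hs, rfl⟩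
  calc #(halfspaceTraces 𝕜 C)
      ≤ #(halfspaceTraces 𝕜 C).shatterer := card_le_card_shatterer _
    _ ≤ #((range (Module.finrank 𝕜 E + 2)).biUnion C.powersetCard) := card_le_card hsub
    _ ≤ ∑ k ∈ range (Module.finrank 𝕜 E + 2), #(C.powersetCard k) := card_biUnion_le
    _ = ∑ k ∈ range (Module.finrank 𝕜 E + 2), (#C).choose k := by simp only [card_powersetCard]

end HalfspaceTraces

/-! ### The 0/1-cube and its faces -/

section Cube

variable {d : ℕ} {v w x : Fin d → ℝ}

lemma mem_cube01 : x ∈ cube01 d ↔ ∀ i, x i = 0 ∨ x i = 1 := by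
  simp only [cube01, mem_image, mem_univ, true_and]
  constructor
  · rintro ⟨f, rfl⟩ i
    cases f i <;> simp
  · refine fun h ↦ ⟨fun i ↦ decide (x i = 1), funext fun i ↦ ?_⟩
    rcases h i with hi | hi <;> simp [hi]

lemma card_cube01 (d : ℕ) : #(cube01 d) = 2 ^ d := by
  rw [cube01, card_image_of_injective]
  · simp
  · intro f g hfg
    funext i
    have := congrFun hfg i
    cases hf : f i <;> cases hg : g i <;> simp_all

lemma card_halfspaceTraces_cube01_le (d : ℕ) :
    #(halfspaceTraces ℝ (cube01 d)) ≤ (d + 2) * 2 ^ (d * (d + 1)) := by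
  refine (card_halfspaceTraces_le _).trans ?_
  rw [Module.finrank_fin_fun, card_cube01]
  refine (sum_le_card_nsmul _ _ (2 ^ (d * (d + 1))) fun k hk ↦ ?_).trans (by simp)
  have hk : k ≤ d + 1 := Nat.le_of_lt_succ (mem_range.1 hk)
  calc (2 ^ d).choose k ≤ (2 ^ d) ^ k := Nat.choose_le_pow _ _
    _ ≤ (2 ^ d) ^ (d + 1) := Nat.pow_le_pow_right (by positivity) hk
    _ = 2 ^ (d * (d + 1)) := (pow_mul _ _ _).symm

lemma mem_extremePoints_of_mem_cube01 (hx : x ∈ cube01 d) :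
    x ∈ (Set.univ.pi fun _ : Fin d ↦ Set.Icc (0 : ℝ) 1).extremePoints ℝ := by
  rw [extremePoints_pi]
  intro i _
  rw [Set.extremePoints_Icc zero_le_one]
  exact mem_cube01.1 hx i

lemma eq_or_eq_of_mem_segment_of_mem_cube01 (hv : v ∈ cube01 d) (hw : w ∈ cube01 d)
    (hx : x ∈ cube01 d) (hxvw : x ∈ segment ℝ v w) : x = v ∨ x = w :=
  ((mem_extremePoints_iff_forall_segment.1 (mem_extremePoints_of_mem_cube01 hx)).2
    v (mem_extremePoints_of_mem_cube01 hv).1 w (mem_extremePoints_of_mem_cube01 hw).1 hxvw).imp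
    Eq.symm Eq.symm

/-- The vertex set of the smallest face of the 0/1-cube containing `v` and `w`: the analogue for
`cube01` of `cubeFace`. -/
def cube01Face (v w : Fin d → ℝ) : Finset (Fin d → ℝ) :=
  {x ∈ cube01 d | ∀ i, v i = w i → x i = v i}

lemma cube01Face_subset (v w : Fin d → ℝ) : cube01Face v w ⊆ cube01 d := filter_subset _ _

lemma add_sub_mem_cube01Face (hv : v ∈ cube01 d) (hw : w ∈ cube01 d) (hx : x ∈ cube01Face v w) :
    v + w - x ∈ cube01Face v w := by
  rw [mem_cube01] at hv hw
  simp only [cube01Face, mem_filter, mem_cube01, Pi.sub_apply, Pi.add_apply] at hx ⊢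
  obtain ⟨hx01, hxvw⟩ := hx
  refine ⟨fun i ↦ ?_, fun i hi ↦ by linarith [hxvw i hi]⟩
  have := hxvw i
  rcases hv i with hvi | hvi <;> rcases hw i with hwi | hwi <;> rcases hx01 i with hxi | hxi <;>
    simp_all

lemma two_pow_hdist_le_card_cube01Face (hv : v ∈ cube01 d) (hw : w ∈ cube01 d) :
    2 ^ hdist v w ≤ #(cube01Face v w) := by
  rw [hdist, ← card_powerset]
  refine card_le_card_of_injOn (fun s ↦ s.piecewise w v) (fun s _ ↦ ?_) (fun s hs t ht hst ↦ ?_)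
  · refine mem_filter.2 ⟨mem_cube01.2 fun i ↦ ?_, fun i hi ↦ ?_⟩
    · simp only [Finset.piecewise]
      split_ifs
      exacts [mem_cube01.1 hw i, mem_cube01.1 hv i]
    · simp [Finset.piecewise, hi]
  · have hflip : ∀ r ⊆ ({i | v i ≠ w i} : Finset (Fin d)), ∀ i, i ∈ r ↔ r.piecewise w v i ≠ v i :=
      fun r hr i ↦ by
        by_cases hi : i ∈ r
        · simpa [hi] using (mem_filter.1 (hr hi)).2.symm
        · simp [hi]
    ext i
    have hsti : s.piecewise w v i = t.piecewise w v i := congrFun hst i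
    rw [hflip s (mem_powerset.1 hs), hflip t (mem_powerset.1 ht), hsti]

/-- The pairs `{v, w}` of vertices of the 0/1-cube at Hamming distance less than `K`. -/
def shortPairs (d K : ℕ) : Finset (Finset (Fin d → ℝ)) :=
  {e ∈ (cube01 d).powersetCard 2 | ∃ v w, e = {v, w} ∧ hdist v w < K}

lemma card_shortPairs_le (d K : ℕ) :
    #(shortPairs d K) ≤ 2 ^ d * #{D : Finset (Fin d) | #D < K} := by
  rw [← card_cube01, ← card_product]
  refine (card_le_card ?_).trans (card_image_le (f := fun p ↦ {p.1, p.2.piecewise (1 - p.1) p.1}))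
  intro e he
  obtain ⟨he, v, w, rfl, hK⟩ := mem_filter.1 he
  have hvw := (mem_powersetCard.1 he).1
  have hv : v ∈ cube01 d := hvw (mem_insert_self _ _)
  have hw : w ∈ cube01 d := hvw (mem_insert_of_mem (mem_singleton_self _))
  refine mem_image.2 ⟨(v, ({i | v i ≠ w i} : Finset (Fin d))),
    mem_product.2 ⟨hv, mem_filter.2 ⟨mem_univ _, hK⟩⟩, ?_⟩
  congr 2
  funext i
  rcases mem_cube01.1 hv i with hvi | hvi <;> rcases mem_cube01.1 hw i with hwi | hwi <;>
    simp [Finset.piecewise, hvi, hwi]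

end Cube

/-! ### Edges and the half-spaces exposing them -/

section Edge

variable {d : ℕ} {P : Set (Fin d → ℝ)} {v w : Fin d → ℝ} {X : Finset (Fin d → ℝ)}

lemma IsEdge.symm (h : IsEdge P v w) : IsEdge P w v := ⟨h.1.symm, segment_symm ℝ v w ▸ h.2⟩

lemma edgeEvent_pair_iff : EdgeEvent (X, {v, w}) ↔ IsEdge (convexHull ℝ (X : Set _)) v w := by
  refine ⟨fun ⟨v', w', hpair, h⟩ ↦ ?_, fun h ↦ ⟨v, w, rfl, h⟩⟩
  have hpair : ({v, w} : Set (Fin d → ℝ)) = {v', w'} := by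
    simpa only [coe_pair] using congrArg ((↑) : Finset (Fin d → ℝ) → Set (Fin d → ℝ)) hpair
  obtain ⟨rfl, rfl⟩ | ⟨rfl, rfl⟩ := Set.pair_eq_pair_iff.1 hpair
  exacts [h, h.symm]

lemma IsEdge.exists_functional (h : IsEdge P v w) :
    ∃ l : (Fin d → ℝ) →ₗ[ℝ] ℝ, l v = l w ∧ ∀ x ∈ P, l v ≤ l x → x ∈ segment ℝ v w := by
  obtain ⟨l, hl⟩ := h.2 ⟨v, left_mem_segment ℝ v w⟩
  have hv : v ∈ P ∧ ∀ y ∈ P, l y ≤ l v := hl.subset (left_mem_segment ℝ v w)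
  have hw : w ∈ P ∧ ∀ y ∈ P, l y ≤ l w := hl.subset (right_mem_segment ℝ v w)
  refine ⟨l.toLinearMap, le_antisymm (hw.2 v hv.1) (hv.2 w hw.1), fun x hx hvx ↦ ?_⟩
  exact hl.superset ⟨hx, fun y hy ↦ (hv.2 y hy).trans hvx⟩

/-- A family of subsets of the 0/1-cube one of which is missed by `X` whenever `v, w ∈ X` span an
edge of `conv X`: the traces of half-spaces on `cube01Face v w \ {v, w}` containing at least half of
the `2 ^ hdist v w` vertices of this face, up to `v` and `w`. -/
def edgeObstructions (v w : Fin d → ℝ) : Finset (Finset (Fin d → ℝ)) :=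
  {B ∈ (halfspaceTraces ℝ (cube01 d)).image fun T ↦ (cube01Face v w ∩ T) \ {v, w} |
    2 ^ hdist v w ≤ 2 * (#B + 2)}

lemma card_edgeObstructions_le (v w : Fin d → ℝ) :
    #(edgeObstructions v w) ≤ (d + 2) * 2 ^ (d * (d + 1)) :=
  (card_filter_le _ _).trans <| card_image_le.trans <| card_halfspaceTraces_cube01_le d

lemma subset_cube01_of_mem_edgeObstructions {B : Finset (Fin d → ℝ)}
    (hB : B ∈ edgeObstructions v w) : B ⊆ cube01 d := by
  obtain ⟨T, _, rfl⟩ := mem_image.1 (mem_filter.1 hB).1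
  exact sdiff_subset.trans (inter_subset_left.trans (cube01Face_subset v w))

lemma disjoint_pair_of_mem_edgeObstructions {B : Finset (Fin d → ℝ)}
    (hB : B ∈ edgeObstructions v w) : Disjoint {v, w} B := by
  obtain ⟨T, _, rfl⟩ := mem_image.1 (mem_filter.1 hB).1
  exact disjoint_sdiff

lemma IsEdge.exists_disjoint_edgeObstruction (hX : X ⊆ cube01 d) (hv : v ∈ X) (hw : w ∈ X)
    (h : IsEdge (convexHull ℝ (X : Set (Fin d → ℝ))) v w) :
    ∃ B ∈ edgeObstructions v w, Disjoint X B := by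
  obtain ⟨l, hlvw, hl⟩ := h.exists_functional
  set T : Finset (Fin d → ℝ) := {x ∈ cube01 d | l v ≤ l x}
  have hT : T ∈ halfspaceTraces ℝ (cube01 d) := mem_halfspaceTraces.2 ⟨l, l v, fun x ↦ mem_filter⟩
  have hhalf : #(cube01Face v w) ≤ 2 * #(cube01Face v w ∩ T) := by
    have hinter : cube01Face v w ∩ T = {x ∈ cube01Face v w | l v ≤ l x} :=
      (inter_filter _ _ _).trans (by rw [inter_eq_left.2 (cube01Face_subset v w)])
    rw [hinter]
    refine card_le_two_mul_card_filter_le_map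
      (fun x hx ↦ add_sub_mem_cube01Face (hX hv) (hX hw) hx) ?_
    rw [map_add, ← hlvw, two_mul]
  refine ⟨(cube01Face v w ∩ T) \ {v, w}, mem_filter.2 ⟨mem_image_of_mem _ hT, ?_⟩, ?_⟩
  · have hdist := two_pow_hdist_le_card_cube01Face (hX hv) (hX hw)
    have hsdiff := le_card_sdiff {v, w} (cube01Face v w ∩ T)
    have hpair := card_le_two (a := v) (b := w)
    omega
  · refine disjoint_left.2 fun x hxX hxB ↦ (mem_sdiff.1 hxB).2 ?_
    have hxT : x ∈ T := (mem_inter.1 (mem_sdiff.1 hxB).1).2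
    rw [mem_insert, mem_singleton]
    exact eq_or_eq_of_mem_segment_of_mem_cube01 (hX hv) (hX hw) (hX hxX)
      (hl x (subset_convexHull ℝ _ hxX) (mem_filter.1 hxT).2)

end Edge

/-! ### The expected density -/

section ExpDensity

variable {d n : ℕ}

/-- The conditional probability that the pair `e` is an edge of `conv X`, given `e ⊆ X`, for a
uniformly random `n`-element subset `X` of the 0/1-cube. The denominator is the number of such `X`
containing `e` if `e` is a pair of vertices of the cube and `2 ≤ n`. -/
def condEdgeProb (n : ℕ) (e : Finset (Fin d → ℝ)) : ℝ :=
  (#{X ∈ (cube01 d).powersetCard n | e ⊆ X ∧ EdgeEvent (X, e)} : ℝ) /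
    ((2 ^ d - 2).choose (n - 2) : ℝ)

lemma expDensity_nonneg (d n : ℕ) : 0 ≤ expDensity d n :=
  div_nonneg (sum_nonneg fun _ _ ↦ div_nonneg (Nat.cast_nonneg _) (Nat.cast_nonneg _))
    (Nat.cast_nonneg _)

lemma sum_edgeCount_eq_sum_card (d n : ℕ) :
    ∑ X ∈ (cube01 d).powersetCard n, edgeCount X =
      ∑ e ∈ (cube01 d).powersetCard 2,
        #{X ∈ (cube01 d).powersetCard n | e ⊆ X ∧ EdgeEvent (X, e)} := by
  have hedgeCount : ∀ X ∈ (cube01 d).powersetCard n,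
      edgeCount X = #{e ∈ (cube01 d).powersetCard 2 | e ⊆ X ∧ EdgeEvent (X, e)} := fun X hX ↦ by
    have hXC : X ⊆ cube01 d := (mem_powersetCard.1 hX).1
    rw [edgeCount]
    refine congrArg card (Finset.ext fun e ↦ ?_)
    rw [mem_filter, mem_filter, mem_powersetCard, mem_powersetCard]
    exact ⟨fun ⟨⟨heX, he⟩, hedge⟩ ↦ ⟨⟨heX.trans hXC, he⟩, heX, hedge⟩,
      fun ⟨⟨_, he⟩, heX, hedge⟩ ↦ ⟨⟨heX, he⟩, hedge⟩⟩
  rw [sum_congr rfl hedgeCount]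
  exact sum_card_bipartiteAbove_eq_sum_card_bipartiteBelow
    fun (X e : Finset (Fin d → ℝ)) ↦ e ⊆ X ∧ EdgeEvent (X, e)

lemma expDensity_eq_average_condEdgeProb (d : ℕ) (hn : 2 ≤ n) :
    expDensity d n =
      (∑ e ∈ (cube01 d).powersetCard 2, condEdgeProb n e) / ((2 ^ d).choose 2 : ℝ) := by
  have hdensity : ∀ X ∈ (cube01 d).powersetCard n,
      graphDensity X = edgeCount X / (n.choose 2 : ℝ) := fun X hX ↦ by
    rw [graphDensity, (mem_powersetCard.1 hX).2]
  have hchoose : ((2 ^ d).choose n : ℝ) * n.choose 2 =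
      (2 ^ d - 2).choose (n - 2) * (2 ^ d).choose 2 :=
    mod_cast (Nat.choose_mul hn).trans (mul_comm _ _)
  simp only [condEdgeProb]
  rw [expDensity, sum_congr rfl hdensity, ← sum_div, ← sum_div, ← Nat.cast_sum, ← Nat.cast_sum,
    sum_edgeCount_eq_sum_card, card_powersetCard, card_cube01, div_div, div_div,
    mul_comm (n.choose 2 : ℝ), hchoose]

lemma condEdgeProb_le_one {e : Finset (Fin d → ℝ)} (he : e ∈ (cube01 d).powersetCard 2) :
    condEdgeProb n e ≤ 1 := by
  obtain ⟨heC, he2⟩ := mem_powersetCard.1 he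
  refine div_le_one_of_le₀ ?_ (Nat.cast_nonneg _)
  have hcount := card_filter_subset_and_disjoint_le heC (empty_subset _) (disjoint_empty_right _) n
  rw [he2, card_cube01, card_empty, Nat.sub_zero] at hcount
  refine mod_cast (card_le_card fun X hX ↦ ?_).trans hcount
  rw [mem_filter] at hX ⊢
  exact ⟨hX.1, hX.2.1, disjoint_empty_right _⟩

lemma condEdgeProb_pair_le {v w : Fin d → ℝ} (hvw : {v, w} ∈ (cube01 d).powersetCard 2) :
    condEdgeProb n {v, w} ≤ ((d + 2) * 2 ^ (d * (d + 1))) *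
      Real.exp (-((2 ^ hdist v w / 2 - 2) * (n - 2 : ℕ) / 2 ^ d)) := by
  obtain ⟨hvwC, hvw2⟩ := mem_powersetCard.1 hvw
  set Q : ℝ := ((2 ^ d - 2).choose (n - 2) : ℝ)
  set η : ℝ := Real.exp (-((2 ^ hdist v w / 2 - 2) * (n - 2 : ℕ) / 2 ^ d))
  have hmiss : ∀ B ∈ edgeObstructions v w,
      (#{X ∈ (cube01 d).powersetCard n | {v, w} ⊆ X ∧ Disjoint X B} : ℝ) ≤ Q * η := fun B hB ↦ by
    have hcard : (2 : ℝ) ^ hdist v w ≤ 2 * (#B + 2) := mod_cast (mem_filter.1 hB).2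
    have hcount := card_filter_subset_and_disjoint_le_exp hvwC
      (subset_cube01_of_mem_edgeObstructions hB) (disjoint_pair_of_mem_edgeObstructions hB) n
    rw [hvw2, card_cube01, Nat.cast_pow, Nat.cast_ofNat] at hcount
    refine hcount.trans (mul_le_mul_of_nonneg_left (Real.exp_le_exp.2 ?_) (Nat.cast_nonneg _))
    gcongr
    linarith
  have hcover : {X ∈ (cube01 d).powersetCard n | {v, w} ⊆ X ∧ EdgeEvent (X, {v, w})} ⊆
      (edgeObstructions v w).biUnion fun B ↦
        {X ∈ (cube01 d).powersetCard n | {v, w} ⊆ X ∧ Disjoint X B} := fun X hX ↦ by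
    obtain ⟨hXC, hvwX, hedge⟩ := mem_filter.1 hX
    obtain ⟨hvX, hwX⟩ := insert_subset_iff.1 hvwX
    obtain ⟨B, hB, hXB⟩ := (edgeEvent_pair_iff.1 hedge).exists_disjoint_edgeObstruction
      (mem_powersetCard.1 hXC).1 hvX (singleton_subset_iff.1 hwX)
    exact mem_biUnion.2 ⟨B, hB, mem_filter.2 ⟨hXC, hvwX, hXB⟩⟩
  refine div_le_of_le_mul₀ (Nat.cast_nonneg _) (by positivity) ?_
  calc (#{X ∈ (cube01 d).powersetCard n | {v, w} ⊆ X ∧ EdgeEvent (X, {v, w})} : ℝ)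
      ≤ ∑ B ∈ edgeObstructions v w,
          (#{X ∈ (cube01 d).powersetCard n | {v, w} ⊆ X ∧ Disjoint X B} : ℝ) :=
        mod_cast (card_le_card hcover).trans card_biUnion_le
    _ ≤ #(edgeObstructions v w) * (Q * η) :=
        (sum_le_card_nsmul _ _ _ hmiss).trans_eq (nsmul_eq_mul _ _)
    _ ≤ ((d + 2) * 2 ^ (d * (d + 1))) * (Q * η) := by
        gcongr
        exact_mod_cast card_edgeObstructions_le v w
    _ = ((d + 2) * 2 ^ (d * (d + 1))) * η * Q := by ring

lemma expDensity_le (hd : 1 ≤ d) (hn : 2 ≤ n) (K : ℕ) :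
    expDensity d n ≤ 4 * (#{D : Finset (Fin d) | #D < K} / 2 ^ d) +
      ((d + 2) * 2 ^ (d * (d + 1))) * Real.exp (-((2 ^ K / 2 - 2) * (n - 2 : ℕ) / 2 ^ d)) := by
  set η : ℝ := ((d + 2) * 2 ^ (d * (d + 1))) * Real.exp (-((2 ^ K / 2 - 2) * (n - 2 : ℕ) / 2 ^ d))
  have hη : 0 ≤ η := by positivity
  have hprob : ∀ e ∈ (cube01 d).powersetCard 2,
      condEdgeProb n e ≤ (if e ∈ shortPairs d K then 1 else 0) + η := fun e he ↦ by
    split_ifs with hshort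
    · exact (condEdgeProb_le_one he).trans (le_add_of_nonneg_right hη)
    · obtain ⟨v, w, -, rfl⟩ := card_eq_two.1 (mem_powersetCard.1 he).2
      have hK : K ≤ hdist v w := not_lt.1 fun h ↦ hshort (mem_filter.2 ⟨he, v, w, rfl, h⟩)
      rw [zero_add]
      refine (condEdgeProb_pair_le he).trans ?_
      simp only [η]
      gcongr
      exact one_le_two
  have hpairs : (2 : ℝ) ^ d * 2 ^ d / 4 ≤ (2 ^ d).choose 2 := by
    have : (2 : ℝ) ≤ 2 ^ d := le_self_pow₀ one_le_two (by omega)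
    rw [Nat.cast_choose_two]
    push_cast
    nlinarith
  have hpairs_pos : (0 : ℝ) < (2 ^ d).choose 2 := hpairs.trans_lt' (by positivity)
  have hshort : shortPairs d K ⊆ (cube01 d).powersetCard 2 := filter_subset _ _
  have hsum : ∑ e ∈ (cube01 d).powersetCard 2, condEdgeProb n e ≤
      #(shortPairs d K) + (2 ^ d).choose 2 * η := by
    refine (sum_le_sum hprob).trans_eq ?_
    rw [sum_add_distrib, sum_boole, sum_const, card_powersetCard, card_cube01, nsmul_eq_mul,
      filter_mem_eq_inter, inter_eq_right.2 hshort]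
  rw [expDensity_eq_average_condEdgeProb d hn, div_le_iff₀ hpairs_pos]
  calc _ ≤ (#(shortPairs d K) : ℝ) + (2 ^ d).choose 2 * η := hsum
    _ ≤ 2 ^ d * #{D : Finset (Fin d) | #D < K} + (2 ^ d).choose 2 * η := by
        gcongr
        exact_mod_cast card_shortPairs_le d K
    _ = 4 * (#{D : Finset (Fin d) | #D < K} / 2 ^ d) * (2 ^ d * 2 ^ d / 4) +
          (2 ^ d).choose 2 * η := by field_simp
    _ ≤ 4 * (#{D : Finset (Fin d) | #D < K} / 2 ^ d) * (2 ^ d).choose 2 +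
          (2 ^ d).choose 2 * η := by gcongr
    _ = _ := by ring

end ExpDensity

/-! ### Asymptotics -/

lemma tendsto_card_filter_card_lt_div_two_pow {s : ℝ} (hs : s < 1 / 2) :
    Tendsto (fun d : ℕ ↦ (#{D : Finset (Fin d) | #D < ⌈s * d⌉₊} : ℝ) / 2 ^ d) atTop (nhds 0) := by
  have hs' : 0 < 1 / 2 - s := by linarith
  refine squeeze_zero' (Eventually.of_forall fun d ↦ by positivity) ?_
    (tendsto_const_div_atTop_nhds_zero_nat (1 / (4 * (1 / 2 - s) ^ 2)))
  filter_upwards [eventually_gt_atTop 0] with d hd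
  have hd' : (0 : ℝ) < d := mod_cast hd
  have hcheb := card_powerset_filter_card_lt_mul_sq_le (univ : Finset (Fin d))
    (mul_nonneg hs'.le hd'.le)
  have hthreshold : (d : ℝ) / 2 - (1 / 2 - s) * d = s * d := by ring
  simp only [powerset_univ, card_univ, Fintype.card_fin, hthreshold] at hcheb
  simp only [Nat.lt_ceil]
  rw [div_div, div_le_div_iff₀ (by positivity) (by positivity)]
  refine le_of_mul_le_mul_left ?_ hd'
  linarith

lemma eventually_sq_add_two_add_le {c ρ : ℝ} (hc : 0 < c) (hρ : 1 < ρ) :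
    ∀ᶠ d : ℕ in atTop, ((d : ℝ) + 2) ^ 2 + d ≤ c * ρ ^ d := by
  filter_upwards [(tendsto_pow_const_div_const_pow_of_one_lt 2 hρ).eventually_lt_const
    (show 0 < c / 10 by positivity), eventually_ge_atTop 1] with d hd hd1
  rw [div_lt_iff₀ (by positivity)] at hd
  have : (1 : ℝ) ≤ d := mod_cast hd1
  nlinarith

lemma add_two_mul_two_pow_le_exp (d : ℕ) :
    ((d : ℝ) + 2) * 2 ^ (d * (d + 1)) ≤ Real.exp (((d : ℝ) + 2) ^ 2) := by
  have hlin : (d : ℝ) + 2 ≤ Real.exp (d + 2) := by linarith [Real.add_one_le_exp ((d : ℝ) + 2)]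
  have htwo : (2 : ℝ) ≤ Real.exp 1 := by linarith [Real.add_one_le_exp (1 : ℝ)]
  calc ((d : ℝ) + 2) * 2 ^ (d * (d + 1))
      ≤ Real.exp (d + 2) * Real.exp 1 ^ (d * (d + 1)) := by gcongr
    _ = Real.exp (d + 2 + d * (d + 1)) := by
        rw [← Real.exp_nat_mul, ← Real.exp_add]; push_cast; ring_nf
    _ ≤ Real.exp (((d : ℝ) + 2) ^ 2) := Real.exp_le_exp.2 (by nlinarith [d.cast_nonneg (α := ℝ)])

lemma tendsto_mul_exp_neg_pow {c ρ : ℝ} (hc : 0 < c) (hρ : 1 < ρ) :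
    Tendsto (fun d : ℕ ↦ ((d : ℝ) + 2) * 2 ^ (d * (d + 1)) * Real.exp (-(c * ρ ^ d)))
      atTop (nhds 0) := by
  refine squeeze_zero' (Eventually.of_forall fun d ↦ by positivity) ?_
    (Real.tendsto_exp_neg_atTop_nhds_zero.comp tendsto_natCast_atTop_atTop)
  filter_upwards [eventually_sq_add_two_add_le hc hρ] with d hd
  calc ((d : ℝ) + 2) * 2 ^ (d * (d + 1)) * Real.exp (-(c * ρ ^ d))
      ≤ Real.exp (((d : ℝ) + 2) ^ 2) * Real.exp (-(c * ρ ^ d)) := by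
        gcongr
        exact add_two_mul_two_pow_le_exp d
    _ = Real.exp (((d : ℝ) + 2) ^ 2 - c * ρ ^ d) := by rw [← Real.exp_add, sub_eq_add_neg]
    _ ≤ Real.exp (-d) := Real.exp_le_exp.2 (by linarith)

lemma exists_two_lt_rpow_mul {γ : ℝ} (hγ : √2 < γ) :
    ∃ s : ℝ, 0 < s ∧ s < 1 / 2 ∧ 2 < (2 : ℝ) ^ s * γ := by
  have hcont : ContinuousAt (fun s : ℝ ↦ (2 : ℝ) ^ s * γ) (1 / 2) :=
    (Real.continuousAt_const_rpow two_ne_zero).mul continuousAt_const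
  have hhalf : 2 < (2 : ℝ) ^ (1 / 2 : ℝ) * γ := by
    rw [← Real.sqrt_eq_rpow]
    calc (2 : ℝ) = √2 * √2 := (Real.mul_self_sqrt zero_le_two).symm
      _ < √2 * γ := by gcongr
  have hleft := (hcont.eventually_const_lt hhalf).filter_mono
    (nhdsWithin_le_nhds (s := Set.Iio (1 / 2 : ℝ)))
  obtain ⟨s, hs, hs0, hs1⟩ := (hleft.and (Ioo_mem_nhdsLT (by norm_num : (0 : ℝ) < 1 / 2))).exists
  exact ⟨s, hs0, hs1, hs⟩

lemma eventually_mul_pow_le_exponent {s γ : ℝ} (hs : 0 < s) (hγ : 1 < γ) {n : ℕ → ℕ}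
    (hn : ∀ᶠ d in atTop, γ ^ d ≤ (n d : ℝ)) :
    ∀ᶠ d : ℕ in atTop, 1 / 8 * ((2 : ℝ) ^ s * γ / 2) ^ d ≤
      (2 ^ ⌈s * d⌉₊ / 2 - 2) * (n d - 2 : ℕ) / 2 ^ d := by
  have hs' : 1 < (2 : ℝ) ^ s := Real.one_lt_rpow one_lt_two hs
  filter_upwards [hn, (tendsto_pow_atTop_atTop_of_one_lt hs').eventually_ge_atTop 8,
    (tendsto_pow_atTop_atTop_of_one_lt hγ).eventually_ge_atTop 4] with d hnd hsd hγd
  have hceil : ((2 : ℝ) ^ s) ^ d ≤ 2 ^ ⌈s * d⌉₊ := by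
    rw [← Real.rpow_mul_natCast zero_le_two, ← Real.rpow_natCast]
    exact Real.rpow_le_rpow_of_exponent_le one_le_two (Nat.le_ceil _)
  have hn2 : γ ^ d / 2 ≤ ((n d - 2 : ℕ) : ℝ) := by
    have : (n d : ℝ) ≤ (n d - 2 : ℕ) + 2 := mod_cast le_tsub_add
    linarith
  calc 1 / 8 * ((2 : ℝ) ^ s * γ / 2) ^ d
      = (((2 : ℝ) ^ s) ^ d / 4) * (γ ^ d / 2) / 2 ^ d := by rw [div_pow, mul_pow]; ring
    _ ≤ (2 ^ ⌈s * d⌉₊ / 2 - 2) * (n d - 2 : ℕ) / 2 ^ d := by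
        gcongr <;> linarith

-- STATEMENT 1
theorem statement1 (n : ℕ → ℕ)
    (h : ∃ ε > (0 : ℝ), ∀ᶠ d in atTop, (Real.sqrt 2 + ε) ^ d ≤ (n d : ℝ)) :
    Tendsto (fun d => expDensity d (n d)) atTop (nhds 0) := by
  obtain ⟨ε, hε, hn⟩ := h
  obtain ⟨s, hs0, hs1, hs⟩ := exists_two_lt_rpow_mul (lt_add_of_pos_right √2 hε)
  set γ := √2 + ε
  have hγ : 1 < γ := (Real.one_le_sqrt.2 one_le_two).trans_lt (lt_add_of_pos_right _ hε)
  have hn2 : ∀ᶠ d in atTop, 2 ≤ n d := by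
    filter_upwards [hn, (tendsto_pow_atTop_atTop_of_one_lt hγ).eventually_ge_atTop 2] with d hnd hγd
    exact_mod_cast hγd.trans hnd
  have hshort := (tendsto_card_filter_card_lt_div_two_pow hs1).const_mul 4
  have hlong := tendsto_mul_exp_neg_pow (c := 1 / 8) (by norm_num) ((one_lt_div two_pos).2 hs)
  refine squeeze_zero' (Eventually.of_forall fun d ↦ expDensity_nonneg d (n d)) ?_
    (by simpa only [mul_zero, add_zero] using hshort.add hlong)
  filter_upwards [hn2, eventually_mul_pow_le_exponent hs0 hγ hn, eventually_ge_atTop 1]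
    with d hnd hexponent hd
  refine (expDensity_le hd hnd ⌈s * d⌉₊).trans ?_
  gcongr

end
end

section
/- For every δ > 0 there exist infinitely many 0/1-polytopes P (i.e., for infinitely many dimensions d there is a d-dimensional polytope P = conv(X) with X ⊆ {0,1}^d) such that both the density of the graph of P is at least 1 − δ and the d-dimensional volume of P is at least 1 − δ. -/
open Finset Filter MeasureTheory

open scoped Classical

noncomputable section

/-!
Take `N ≈ r ^ d` independent uniform vertices of the `d`-cube, where `c ^ 2 < r < 4 / 3` for the
constant `c = meanSqrtSecondMoment`. In expectation, collisions, missing edges and missing volume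
all become negligible.

Two of the points span an edge unless a third point lies on the smallest cube face containing them.
Each third point does so with probability `(3 / 4) ^ d`, and `N * (3 / 4) ^ d → 0`.

If the hull misses a point `x` at distance at least `η` from the boundary of the cube, some linear
functional `a` is negative at `y - x` for every sample point `y`. Let `z` be the projection of `x`
onto the facet, in the coordinate where `|a i|` is largest, that increases `a`. Reweighting the
sample by the density of the product Bernoulli measure with mean `z` moves the expected displacement
to `z - x`, at which `a` is at least `η * |a i|`, whereas its empirical mean remains nonpositive. By
Chebyshev's inequality, `x` is therefore missed with probability at most a polynomial in `d` times
`∏ i, m (x i) / N`, where `m` is the second moment of the one-dimensional Bernoulli density. A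
probability is at most its square root, so the expected missing volume is at most a polynomial in
`d` times `(c / √r) ^ d`, where `c = ∫ √m`. By Cauchy–Schwarz `c ^ 2 < ∫ m = 4 / 3`, strictly
because `m` is not constant, which leaves room for `r`.
-/

open scoped BigOperators Topology

section UniformAverages

variable {ι κ ρ B Ω : Type*} [Fintype ι] [Fintype κ] [Fintype ρ] [DecidableEq ρ]
  [Fintype B] [Fintype Ω]

theorem expect_bool (f : Bool → ℝ) : 𝔼 b, f b = (f true + f false) / 2 := by
  rw [Fintype.expect_eq_sum_div_card]
  simp

theorem expect_sub_sq_le [Nonempty Ω] (f : Ω → ℝ) :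
    𝔼 ω, (f ω - 𝔼 ω', f ω') ^ 2 ≤ 𝔼 ω, f ω ^ 2 := by
  simp only [sub_sq, expect_add_distrib, expect_sub_distrib, ← expect_mul, ← mul_expect,
    Fintype.expect_const]
  linarith [sq_nonneg (𝔼 ω, f ω)]

theorem expect_comp_embedding {M : Type*} [AddCommMonoid M] [Module ℚ≥0 M] [Nonempty B]
    (e : ρ ↪ κ) (F : (ρ → B) → M) : 𝔼 Y : κ → B, F (Y ∘ e) = 𝔼 Z, F Z := by
  let restrict : (κ → B) ≃ (ρ → B) × ({k // k ∉ Set.range e} → B) :=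
    (Equiv.piEquivPiSubtypeProd (· ∈ Set.range e) _).trans
      (((Equiv.ofInjective e e.injective).symm.arrowCongr (.refl B)).prodCongr (.refl _))
  calc 𝔼 Y : κ → B, F (Y ∘ e) = 𝔼 p : (ρ → B) × ({k // k ∉ Set.range e} → B), F p.1 :=
        Fintype.expect_equiv restrict _ _ fun _ => rfl
    _ = 𝔼 Z, F Z := by
        rw [← univ_product_univ, expect_product]
        simp only [Fintype.expect_const]

theorem expect_pi_prod [DecidableEq ι] {K : Type*} [Field K] [CharZero K] (f : ι → B → K) :
    𝔼 y : ι → B, ∏ i, f i (y i) = ∏ i, 𝔼 b, f i b := by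
  simp only [Fintype.expect_eq_sum_div_card, prod_div_distrib, prod_univ_sum,
    Fintype.piFinset_univ, prod_const, card_univ, Fintype.card_fun, Nat.cast_pow]

theorem expect_comp_eval [Nonempty B] (f : B → ℝ) (k : κ) :
    𝔼 Y : κ → B, f (Y k) = 𝔼 b, f b := by
  let e : Fin 1 ↪ κ := ⟨fun _ => k, Function.injective_of_subsingleton _⟩
  simpa [e] using (expect_comp_embedding e fun Z => f (Z 0)).trans <| by
    simpa using expect_pi_prod fun _ : Fin 1 => f

theorem expect_comp_eval_mul_comp_eval [Nonempty B] (f g : B → ℝ) {k l : κ} (hkl : k ≠ l) :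
    𝔼 Y : κ → B, f (Y k) * g (Y l) = (𝔼 b, f b) * 𝔼 b, g b := by
  let e : Fin 2 ↪ κ := ⟨![k, l], by simpa [Function.Injective, Fin.forall_fin_two] using
    ⟨hkl, hkl.symm⟩⟩
  simpa [e] using (expect_comp_embedding e fun Z => f (Z 0) * g (Z 1)).trans <| by
    simpa using expect_pi_prod ![f, g]

theorem expect_sq_sum_of_expect_eq_zero [Nonempty B] {f : B → ℝ} (hf : 𝔼 b, f b = 0) :
    𝔼 Y : κ → B, (∑ k, f (Y k)) ^ 2 = Fintype.card κ * 𝔼 b, f b ^ 2 := by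
  have cross_term (k l : κ) :
      𝔼 Y : κ → B, f (Y k) * f (Y l) = if k = l then 𝔼 b, f b ^ 2 else 0 := by
    split_ifs with hkl
    · simp only [hkl, ← sq]
      exact expect_comp_eval (fun b => f b ^ 2) l
    · rw [expect_comp_eval_mul_comp_eval f f hkl, hf, zero_mul]
  simp only [sq (∑ _, _), sum_mul_sum, expect_sum_comm, cross_term, sum_ite_eq, mem_univ, if_true,
    sum_const, card_univ, nsmul_eq_mul]

/-- The probability of the event `p` for a uniformly random element of the finite type `Ω`,
encoded as the average of the indicator of `p`. -/
def uniformProb (p : Ω → Prop) : ℝ := 𝔼 ω, if p ω then 1 else 0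

theorem uniformProb_eq_card_div (p : Ω → Prop) [DecidablePred p] :
    uniformProb p = #{ω | p ω} / Fintype.card Ω := by
  rw [uniformProb, Fintype.expect_eq_sum_div_card, ← sum_boole]
  congr!

theorem uniformProb_nonneg (p : Ω → Prop) : 0 ≤ uniformProb p :=
  expect_nonneg fun ω _ => by split_ifs <;> norm_num

theorem uniformProb_le_one [Nonempty Ω] (p : Ω → Prop) : uniformProb p ≤ 1 :=
  expect_le univ_nonempty fun ω _ => by split_ifs <;> norm_num

theorem uniformProb_mul_le_expect {p : Ω → Prop} {f : Ω → ℝ} {a : ℝ} (hf : ∀ ω, 0 ≤ f ω)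
    (ha : ∀ ω, p ω → a ≤ f ω) : uniformProb p * a ≤ 𝔼 ω, f ω := by
  rw [uniformProb, expect_mul]
  refine expect_le_expect fun ω _ => ?_
  split_ifs with hω
  · simpa using ha ω hω
  · simpa using hf ω

theorem expect_card_filter {T : Type*} [Fintype T] (p : T → Ω → Prop)
    [∀ ω, DecidablePred (p · ω)] :
    𝔼 ω, (#{t | p t ω} : ℝ) = ∑ t, uniformProb (p t) := by
  simp only [uniformProb, ← sum_boole, expect_sum_comm]
  congr!

theorem uniformProb_forall_coord [Nonempty B] (e : ρ ↪ κ) (p : (ρ → B) → Prop) :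
    uniformProb (fun Y : κ → ι → B => ∀ i, p fun a => Y (e a) i) =
      uniformProb p ^ Fintype.card ι := by
  calc uniformProb (fun Y : κ → ι → B => ∀ i, p fun a => Y (e a) i)
      = 𝔼 W : ι → κ → B, ∏ i, (if p (W i ∘ e) then 1 else 0 : ℝ) :=
        Fintype.expect_equiv (Equiv.piComm _) _ _ fun Y => by
          rw [Fintype.prod_boole]
          congr!
    _ = ∏ _i : ι, 𝔼 w : κ → B, (if p (w ∘ e) then 1 else 0 : ℝ) :=
        expect_pi_prod fun _ w => if p (w ∘ e) then 1 else 0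
    _ = uniformProb p ^ Fintype.card ι := by
        simp only [expect_comp_embedding e fun Z => (if p Z then 1 else 0 : ℝ), prod_const,
          card_univ, uniformProb]

theorem expect_card_filter_embedding [Nonempty B] (p : (ρ → B) → Prop) :
    𝔼 Y : κ → ι → B, (#{e : ρ ↪ κ | ∀ i, p fun a => Y (e a) i} : ℝ) =
      (Fintype.card κ).descFactorial (Fintype.card ρ) * uniformProb p ^ Fintype.card ι := by
  rw [expect_card_filter fun (e : ρ ↪ κ) (Y : κ → ι → B) => ∀ i, p fun a => Y (e a) i]
  simp only [uniformProb_forall_coord, sum_const, card_univ, Fintype.card_embedding_eq,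
    nsmul_eq_mul]

end UniformAverages

section Separation

variable {ι κ : Type*}

/-- The 0/1-point of `ℝ^ι` encoded by a Boolean vector. -/
def boolPoint (y : ι → Bool) : ι → ℝ := fun i => if y i then 1 else 0

/-- The 0/1-polytope spanned by a family of Boolean vectors. -/
def boolHull (Y : κ → ι → Bool) : Set (ι → ℝ) := convexHull ℝ (Set.range fun k => boolPoint (Y k))

theorem boolPoint_apply_inj {y y' : ι → Bool} {i : ι} :
    boolPoint y i = boolPoint y' i ↔ y i = y' i := by
  cases hy : y i <;> cases hy' : y' i <;> simp [boolPoint, hy, hy']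

theorem boolPoint_injective : Function.Injective (boolPoint (ι := ι)) := fun _ _ h =>
  funext fun i => boolPoint_apply_inj.1 (congrFun h i)

theorem boolPoint_mem_Icc (y : ι → Bool) : boolPoint y ∈ Set.Icc 0 1 := by
  constructor <;> intro i <;> cases hy : y i <;> simp [boolPoint, hy]

theorem boolHull_subset_Icc (Y : κ → ι → Bool) : boolHull Y ⊆ Set.Icc 0 1 :=
  convexHull_min (Set.range_subset_iff.2 fun _ => boolPoint_mem_Icc _) (convex_Icc 0 1)

theorem isClosed_boolHull [Finite κ] (Y : κ → ι → Bool) : IsClosed (boolHull Y) :=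
  (Set.finite_range _).isClosed_convexHull ℝ

/-- The projection of `x` onto the facet `y i = 1` (if `b` is true) or `y i = 0` (otherwise) of
the cube. -/
def facetProj (x : ι → ℝ) (i : ι) (b : Bool) : ι → ℝ := Function.update x i (if b then 1 else 0)

theorem facetProj_mem_Icc {x : ι → ℝ} (hx : x ∈ Set.Icc 0 1) (i : ι) (b : Bool) :
    facetProj x i b ∈ Set.Icc 0 1 := by
  have hb : (if b then 1 else 0 : ℝ) ∈ Set.Icc 0 1 := by split_ifs <;> simp
  exact ⟨le_update_iff.2 ⟨hb.1, fun j _ => hx.1 j⟩, update_le_iff.2 ⟨hb.2, fun j _ => hx.2 j⟩⟩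

variable [Fintype ι]

/-- The density, with respect to the uniform measure on `{0,1}^ι`, of the product Bernoulli
measure with mean `z`. -/
def bernoulliDensity (z : ι → ℝ) (y : ι → Bool) : ℝ := ∏ i, 2 * if y i then z i else 1 - z i

/-- The second moment `𝔼 L²` of the density `L` of the Bernoulli measure with mean `t` on `{0,1}`,
with respect to the uniform measure. -/
def bernoulliSecondMoment (t : ℝ) : ℝ := 2 * (t ^ 2 + (1 - t) ^ 2)

theorem one_le_bernoulliSecondMoment (t : ℝ) : 1 ≤ bernoulliSecondMoment t := by
  unfold bernoulliSecondMoment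
  linarith [sq_nonneg (2 * t - 1)]

theorem bernoulliDensity_nonneg {z : ι → ℝ} (hz : z ∈ Set.Icc 0 1) (y : ι → Bool) :
    0 ≤ bernoulliDensity z y :=
  prod_nonneg fun i _ => mul_nonneg zero_le_two <| by
    split_ifs
    exacts [hz.1 i, sub_nonneg.2 (hz.2 i)]

theorem expect_bernoulliDensity (z : ι → ℝ) : 𝔼 y, bernoulliDensity z y = 1 := by
  calc 𝔼 y, bernoulliDensity z y = ∏ i, 𝔼 b : Bool, (2 * if b then z i else 1 - z i) :=
        expect_pi_prod fun i (b : Bool) => 2 * if b then z i else 1 - z i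
    _ = 1 := prod_eq_one fun i _ => by
        rw [expect_bool]
        simp only [if_true, Bool.false_eq_true, if_false]
        ring

theorem expect_bernoulliDensity_mul_boolPoint (z : ι → ℝ) (j : ι) :
    𝔼 y, bernoulliDensity z y * boolPoint y j = z j := by
  let f (i : ι) (b : Bool) : ℝ :=
    (2 * if b then z i else 1 - z i) * if i = j then (if b then 1 else 0) else 1
  calc 𝔼 y, bernoulliDensity z y * boolPoint y j
      = 𝔼 y : ι → Bool, ∏ i, f i (y i) := by
        simp only [f, prod_mul_distrib, prod_ite_eq', mem_univ, if_true, bernoulliDensity,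
          boolPoint]
    _ = ∏ i, 𝔼 b, f i b := expect_pi_prod f
    _ = ∏ i, if i = j then z i else 1 := by
        refine prod_congr rfl fun i _ => ?_
        rw [expect_bool]
        by_cases hij : i = j <;> simp only [f, hij, if_true, Bool.false_eq_true, if_false] <;> ring
    _ = z j := by simp only [prod_ite_eq', mem_univ, if_true]

theorem expect_bernoulliDensity_sq (z : ι → ℝ) :
    𝔼 y, bernoulliDensity z y ^ 2 = ∏ i, bernoulliSecondMoment (z i) := by
  calc 𝔼 y, bernoulliDensity z y ^ 2
      = 𝔼 y : ι → Bool, ∏ i, (2 * if y i then z i else 1 - z i) ^ 2 := by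
        simp only [bernoulliDensity, prod_pow]
    _ = ∏ i, 𝔼 b : Bool, (2 * if b then z i else 1 - z i) ^ 2 :=
        expect_pi_prod fun i (b : Bool) => (2 * if b then z i else 1 - z i) ^ 2
    _ = ∏ i, bernoulliSecondMoment (z i) := prod_congr rfl fun i _ => by
        simp only [expect_bool, bernoulliSecondMoment, if_true, Bool.false_eq_true, if_false]
        ring

/-- The fluctuation, at the sample point `y`, of the reweighted displacement from `x`: its first
term has mean `z - x` for uniformly random `y`. -/
def tiltedDeviation (x z : ι → ℝ) (y : ι → Bool) : ι → ℝ :=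
  bernoulliDensity z y • (boolPoint y - x) - (z - x)

theorem expect_bernoulliDensity_mul_sub (x z : ι → ℝ) (j : ι) :
    𝔼 y, bernoulliDensity z y * (boolPoint y j - x j) = z j - x j := by
  simp only [mul_sub, expect_sub_distrib, ← expect_mul, expect_bernoulliDensity_mul_boolPoint,
    expect_bernoulliDensity, one_mul]

theorem expect_tiltedDeviation (x z : ι → ℝ) (j : ι) : 𝔼 y, tiltedDeviation x z y j = 0 := by
  simp only [tiltedDeviation, Pi.sub_apply, Pi.smul_apply, smul_eq_mul]
  rw [expect_sub_distrib, expect_bernoulliDensity_mul_sub, Fintype.expect_const, sub_self]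

theorem expect_tiltedDeviation_sq_le {x : ι → ℝ} (hx : x ∈ Set.Icc 0 1) (z : ι → ℝ) (j : ι) :
    𝔼 y, tiltedDeviation x z y j ^ 2 ≤ ∏ i, bernoulliSecondMoment (z i) := by
  have displacement_sq_le (y : ι → Bool) : (boolPoint y j - x j) ^ 2 ≤ 1 := by
    obtain ⟨hy0, hy1⟩ := boolPoint_mem_Icc y
    exact (sq_le_one_iff_abs_le_one _).2 <| by
      simpa using abs_sub_le_of_le_of_le (hy0 j) (hy1 j) (hx.1 j) (hx.2 j)
  calc 𝔼 y, tiltedDeviation x z y j ^ 2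
      ≤ 𝔼 y, (bernoulliDensity z y * (boolPoint y j - x j)) ^ 2 := by
        simpa only [expect_bernoulliDensity_mul_sub, tiltedDeviation, Pi.sub_apply,
          Pi.smul_apply, smul_eq_mul] using
            expect_sub_sq_le fun y => bernoulliDensity z y * (boolPoint y j - x j)
    _ ≤ 𝔼 y, bernoulliDensity z y ^ 2 := expect_le_expect fun y _ => by
        rw [mul_pow]
        exact mul_le_of_le_one_right (sq_nonneg _) (displacement_sq_le y)
    _ = ∏ i, bernoulliSecondMoment (z i) := expect_bernoulliDensity_sq z

theorem exists_abs_mul_le_dotProduct_facetProj_sub {x : ι → ℝ} {i : ι} {η : ℝ} (hη : η ≤ x i)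
    (hη' : x i ≤ 1 - η) (a : ι → ℝ) : ∃ b, |a i| * η ≤ a ⬝ᵥ (facetProj x i b - x) := by
  have shift (b : Bool) : a ⬝ᵥ (facetProj x i b - x) = a i * ((if b then 1 else 0) - x i) := by
    rw [facetProj, dotProduct, sum_eq_single i]
    · simp only [Pi.sub_apply, Function.update_self]
    · intro j _ hj
      simp only [Pi.sub_apply, Function.update_of_ne hj, sub_self, mul_zero]
    · simp only [mem_univ, not_true_eq_false, false_implies]
  simp only [shift]
  rcases le_total 0 (a i) with ha | ha
  · refine ⟨true, ?_⟩
    rw [abs_of_nonneg ha, if_pos rfl]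
    exact mul_le_mul_of_nonneg_left (by linarith) ha
  · refine ⟨false, ?_⟩
    rw [abs_of_nonpos ha, if_neg Bool.false_ne_true]
    linarith [mul_le_mul_of_nonpos_left hη ha]

theorem exists_forall_dotProduct_sub_neg [Finite κ] {p : κ → ι → ℝ} {x : ι → ℝ}
    (hx : x ∉ convexHull ℝ (Set.range p)) : ∃ a : ι → ℝ, ∀ k, a ⬝ᵥ (p k - x) < 0 := by
  obtain ⟨f, u, hf, hu⟩ := geometric_hahn_banach_closed_point (convex_convexHull ℝ _)
    ((Set.finite_range p).isClosed_convexHull ℝ) hx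
  obtain ⟨a, ha⟩ := (dotProductEquiv ℝ ι).surjective f.toLinearMap
  refine ⟨a, fun k => ?_⟩
  calc a ⬝ᵥ (p k - x) = f (p k - x) := LinearMap.congr_fun ha _
    _ = f (p k) - f x := map_sub f _ _
    _ < 0 := sub_neg.2 ((hf _ (subset_convexHull ℝ _ ⟨k, rfl⟩)).trans hu)

theorem abs_dotProduct_le {a : ι → ℝ} {M : ℝ} (ha : ∀ i, |a i| ≤ M) (v : ι → ℝ) :
    |a ⬝ᵥ v| ≤ M * ∑ i, |v i| := by
  calc |a ⬝ᵥ v| ≤ ∑ i, |a i * v i| := abs_sum_le_sum_abs _ _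
    _ ≤ M * ∑ i, |v i| := by
        rw [mul_sum]
        exact sum_le_sum fun i _ => by
          rw [abs_mul]
          exact mul_le_mul_of_nonneg_right (ha i) (abs_nonneg _)

variable [Fintype κ]

theorem dotProduct_sum_tiltedDeviation (a x z : ι → ℝ) (Y : κ → ι → Bool) :
    a ⬝ᵥ ∑ k, tiltedDeviation x z (Y k) =
      ∑ k, bernoulliDensity z (Y k) * (a ⬝ᵥ (boolPoint (Y k) - x)) -
        Fintype.card κ * (a ⬝ᵥ (z - x)) := by
  rw [dotProduct_sum]
  have dotProduct_tiltedDeviation (y : ι → Bool) : a ⬝ᵥ tiltedDeviation x z y =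
      bernoulliDensity z y * (a ⬝ᵥ (boolPoint y - x)) - a ⬝ᵥ (z - x) := by
    rw [tiltedDeviation, dotProduct_sub, dotProduct_smul, smul_eq_mul]
  simp only [dotProduct_tiltedDeviation, sum_sub_distrib, sum_const, card_univ, nsmul_eq_mul]

theorem exists_sq_le_sum_sq_tiltedDeviation [Nonempty κ] {Y : κ → ι → Bool} {x : ι → ℝ} {η : ℝ}
    (hη : 0 < η) (hx : ∀ i, η ≤ x i) (hx' : ∀ i, x i ≤ 1 - η) (hxY : x ∉ boolHull Y) :
    ∃ i b, (η * Fintype.card κ) ^ 2 ≤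
      Fintype.card ι * ∑ j, (∑ k, tiltedDeviation x (facetProj x i b) (Y k) j) ^ 2 := by
  obtain ⟨a, ha⟩ := exists_forall_dotProduct_sub_neg hxY
  obtain ⟨i₀, hi₀⟩ : ∃ i, a i ≠ 0 := Function.ne_iff.1 fun (h : a = 0) => by
    simpa [h] using ha (Classical.arbitrary κ)
  have : Nonempty ι := ⟨i₀⟩
  obtain ⟨i, hi⟩ := Finite.exists_max fun j => |a j|
  have hai : 0 < |a i| := (abs_pos.2 hi₀).trans_le (hi i₀)
  obtain ⟨b, hb⟩ := exists_abs_mul_le_dotProduct_facetProj_sub (hx i) (hx' i) a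
  refine ⟨i, b, ?_⟩
  have hz : facetProj x i b ∈ Set.Icc 0 1 :=
    facetProj_mem_Icc ⟨fun j => hη.le.trans (hx j), fun j => (hx' j).trans (by simp [hη.le])⟩ i b
  set S := ∑ k, tiltedDeviation x (facetProj x i b) (Y k) with hS
  have tilted_mean_neg : a ⬝ᵥ S + Fintype.card κ * (a ⬝ᵥ (facetProj x i b - x)) ≤ 0 := by
    rw [dotProduct_sum_tiltedDeviation, sub_add_cancel]
    exact sum_nonpos fun k _ => mul_nonpos_of_nonneg_of_nonpos (bernoulliDensity_nonneg hz _)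
      (ha k).le
  have large_deviation : η * Fintype.card κ ≤ ∑ j, |S j| := by
    refine le_of_mul_le_mul_left ?_ hai
    have := mul_le_mul_of_nonneg_left hb (Nat.cast_nonneg (α := ℝ) (Fintype.card κ))
    linarith [neg_le_of_abs_le (abs_dotProduct_le hi S)]
  calc (η * Fintype.card κ) ^ 2 ≤ (∑ j, |S j|) ^ 2 :=
        pow_le_pow_left₀ (by positivity) large_deviation 2
    _ ≤ Fintype.card ι * ∑ j, |S j| ^ 2 := sq_sum_le_card_mul_sum_sq
    _ = _ := by simp only [sq_abs, hS, Finset.sum_apply]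

theorem expect_sum_sq_sum_tiltedDeviation_le {x : ι → ℝ} (hx : x ∈ Set.Icc 0 1) (z : ι → ℝ) :
    𝔼 Y : κ → ι → Bool, ∑ j, (∑ k, tiltedDeviation x z (Y k) j) ^ 2 ≤
      Fintype.card ι * (Fintype.card κ * ∏ i, bernoulliSecondMoment (z i)) := by
  rw [expect_sum_comm, ← nsmul_eq_mul, ← card_univ]
  refine sum_le_card_nsmul _ _ _ fun j _ => ?_
  rw [expect_sq_sum_of_expect_eq_zero (expect_tiltedDeviation x z j)]
  exact mul_le_mul_of_nonneg_left (expect_tiltedDeviation_sq_le hx z j) (Nat.cast_nonneg _)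

theorem prod_bernoulliSecondMoment_facetProj_le (x : ι → ℝ) (i : ι) (b : Bool) :
    ∏ j, bernoulliSecondMoment (facetProj x i b j) ≤ 2 * ∏ j, bernoulliSecondMoment (x j) := by
  have nonneg (t : ℝ) := zero_le_one.trans (one_le_bernoulliSecondMoment t)
  have away : ∏ j ∈ univ.erase i, bernoulliSecondMoment (facetProj x i b j) =
      ∏ j ∈ univ.erase i, bernoulliSecondMoment (x j) :=
    prod_congr rfl fun j hj => by rw [facetProj, Function.update_of_ne (ne_of_mem_erase hj)]
  have at_facet : bernoulliSecondMoment (facetProj x i b i) = 2 := by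
    cases b <;> simp [facetProj, bernoulliSecondMoment]
  rw [← mul_prod_erase _ _ (mem_univ i), ← mul_prod_erase _ _ (mem_univ i), away, at_facet]
  exact mul_le_mul_of_nonneg_left
    (le_mul_of_one_le_left (prod_nonneg fun _ _ => nonneg _) (one_le_bernoulliSecondMoment _))
    zero_le_two

/-- The probability that `x` is not in the convex hull of a uniformly random family, indexed by
`κ`, of vertices of the cube. -/
def missProb (κ : Type*) [Fintype κ] (x : ι → ℝ) : ℝ :=
  uniformProb fun Y : κ → ι → Bool => x ∉ boolHull Y

theorem missProb_mul_sq_le [Nonempty κ] {x : ι → ℝ} {η : ℝ} (hη : 0 < η)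
    (hx : ∀ i, η ≤ x i) (hx' : ∀ i, x i ≤ 1 - η) :
    missProb κ x * (η * Fintype.card κ) ^ 2 ≤
      4 * Fintype.card ι ^ 3 * Fintype.card κ * ∏ i, bernoulliSecondMoment (x i) := by
  have hx01 : x ∈ Set.Icc 0 1 :=
    ⟨fun i => hη.le.trans (hx i), fun i => (hx' i).trans (by simp [hη.le])⟩
  let G (Y : κ → ι → Bool) (i : ι) (b : Bool) : ℝ :=
    Fintype.card ι * ∑ j, (∑ k, tiltedDeviation x (facetProj x i b) (Y k) j) ^ 2
  have G_nonneg (Y : κ → ι → Bool) (i : ι) (b : Bool) : 0 ≤ G Y i b :=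
    mul_nonneg (Nat.cast_nonneg _) (sum_nonneg fun _ _ => sq_nonneg _)
  have expect_G_le (i : ι) (b : Bool) : 𝔼 Y, G Y i b ≤
      2 * Fintype.card ι ^ 2 * Fintype.card κ * ∏ i, bernoulliSecondMoment (x i) := by
    calc 𝔼 Y, G Y i b
        ≤ Fintype.card ι * (Fintype.card ι * (Fintype.card κ *
            ∏ j, bernoulliSecondMoment (facetProj x i b j))) := by
          rw [← mul_expect]
          gcongr
          exact expect_sum_sq_sum_tiltedDeviation_le hx01 _
      _ ≤ Fintype.card ι * (Fintype.card ι * (Fintype.card κ *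
            (2 * ∏ i, bernoulliSecondMoment (x i)))) := by
          gcongr
          exact prod_bernoulliSecondMoment_facetProj_le x i b
      _ = _ := by ring
  calc missProb κ x * (η * Fintype.card κ) ^ 2
      ≤ 𝔼 Y, ∑ i, ∑ b, G Y i b := by
        refine uniformProb_mul_le_expect
          (fun Y => sum_nonneg fun i _ => sum_nonneg fun b _ => G_nonneg Y i b) fun Y hY => ?_
        obtain ⟨i, b, h⟩ := exists_sq_le_sum_sq_tiltedDeviation hη hx hx' hY
        calc (η * Fintype.card κ) ^ 2 ≤ G Y i b := h
          _ ≤ ∑ b, G Y i b := single_le_sum (fun b _ => G_nonneg Y i b) (mem_univ b)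
          _ ≤ ∑ i, ∑ b, G Y i b := single_le_sum (f := fun i => ∑ b, G Y i b)
              (fun i _ => sum_nonneg fun b _ => G_nonneg Y i b) (mem_univ i)
    _ = ∑ i, ∑ b, 𝔼 Y, G Y i b := by simp only [expect_sum_comm]
    _ ≤ ∑ _i : ι, ∑ _b : Bool,
          2 * Fintype.card ι ^ 2 * Fintype.card κ * ∏ i, bernoulliSecondMoment (x i) :=
        sum_le_sum fun i _ => sum_le_sum fun b _ => expect_G_le i b
    _ = _ := by
        simp only [sum_const, card_univ, Fintype.card_bool, nsmul_eq_mul, Nat.cast_ofNat]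
        ring

theorem missProb_le [Nonempty κ] {x : ι → ℝ} {η : ℝ} (hη : 0 < η)
    (hx : ∀ i, η ≤ x i) (hx' : ∀ i, x i ≤ 1 - η) :
    missProb κ x ≤ √(4 * Fintype.card ι ^ 3 / (η ^ 2 * Fintype.card κ)) *
      ∏ i, √(bernoulliSecondMoment (x i)) := by
  have hN : (0 : ℝ) < Fintype.card κ := Nat.cast_pos.2 Fintype.card_pos
  have second_moment_bound : missProb κ x ≤
      4 * Fintype.card ι ^ 3 / (η ^ 2 * Fintype.card κ) * ∏ i, bernoulliSecondMoment (x i) := by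
    rw [div_mul_eq_mul_div, le_div_iff₀ (by positivity)]
    exact le_of_mul_le_mul_right (by linear_combination missProb_mul_sq_le (κ := κ) hη hx hx') hN
  have missProb_nonneg : 0 ≤ missProb κ x := uniformProb_nonneg _
  have missProb_le_one : missProb κ x ≤ 1 := uniformProb_le_one (Ω := κ → ι → Bool) _
  calc missProb κ x ≤ √(missProb κ x) :=
        Real.le_sqrt_of_sq_le (pow_le_of_le_one missProb_nonneg missProb_le_one two_ne_zero)
    _ ≤ √(4 * Fintype.card ι ^ 3 / (η ^ 2 * Fintype.card κ) *
          ∏ i, bernoulliSecondMoment (x i)) := Real.sqrt_le_sqrt second_moment_bound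
    _ = _ := by
        rw [Real.sqrt_mul (by positivity), Real.sqrt_prod _ fun i _ =>
          zero_le_one.trans (one_le_bernoulliSecondMoment _)]

end Separation

section Volume

variable {ι κ : Type*} [Fintype ι] [Fintype κ]

section Fubini

variable {α Ω : Type*} [Fintype Ω] {S : Ω → Set α}

theorem uniformProb_mem_eq_expect_indicator (x : α) :
    uniformProb (fun ω => x ∈ S ω) = 𝔼 ω, (S ω).indicator 1 x := by
  simp only [uniformProb, Set.indicator_apply, Pi.one_apply]

variable [MeasurableSpace α] {μ : Measure α} [IsFiniteMeasure μ]

theorem integrable_uniformProb_mem (hS : ∀ ω, MeasurableSet (S ω)) :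
    Integrable (fun x => uniformProb fun ω => x ∈ S ω) μ := by
  simp only [uniformProb_mem_eq_expect_indicator, Fintype.expect_eq_sum_div_card]
  exact (integrable_finsetSum _ fun ω _ => (integrable_const 1).indicator (hS ω)).div_const _

theorem integral_uniformProb_mem (hS : ∀ ω, MeasurableSet (S ω)) :
    ∫ x, uniformProb (fun ω => x ∈ S ω) ∂μ = 𝔼 ω, μ.real (S ω) := by
  simp only [uniformProb_mem_eq_expect_indicator, Fintype.expect_eq_sum_div_card]
  rw [integral_div, integral_finsetSum _ fun ω _ => (integrable_const 1).indicator (hS ω)]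
  simp only [integral_indicator_one (hS _)]

end Fubini

theorem volume_real_Icc_zero_one : volume.real (Set.Icc (0 : ι → ℝ) 1) = 1 := by
  rw [measureReal_def, Real.volume_Icc_pi_toReal zero_le_one]
  simp

theorem volume_real_Icc_zero_one_sdiff_le {η : ℝ} (hη : 0 ≤ η) (hη' : η ≤ 1 / 2) :
    volume.real (Set.Icc (0 : ι → ℝ) 1 \ Set.Icc (fun _ => η) (fun _ => 1 - η)) ≤
      2 * η * Fintype.card ι := by
  have hsub : Set.Icc (fun _ : ι => η) (fun _ => 1 - η) ⊆ Set.Icc 0 1 :=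
    Set.Icc_subset_Icc (fun _ => hη) fun _ => by simpa using hη
  have volume_core : volume.real (Set.Icc (fun _ : ι => η) (fun _ => 1 - η)) =
      (1 + -(2 * η)) ^ Fintype.card ι := by
    rw [measureReal_def, Real.volume_Icc_pi_toReal fun _ => by linarith, prod_const, card_univ]
    ring
  rw [measureReal_sdiff hsub measurableSet_Icc isCompact_Icc.measure_ne_top, volume_core,
    volume_real_Icc_zero_one]
  linarith [one_add_mul_le_pow (a := -(2 * η)) (by linarith) (Fintype.card ι)]

/-- The mean over `[0, 1]` of the `L²` norm of the density of the Bernoulli measure with mean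
`t`. -/
def meanSqrtSecondMoment : ℝ := ∫ t in (0 : ℝ)..1, √(bernoulliSecondMoment t)

theorem continuous_bernoulliSecondMoment : Continuous bernoulliSecondMoment := by
  unfold bernoulliSecondMoment
  fun_prop

theorem integral_bernoulliSecondMoment : ∫ t in (0 : ℝ)..1, bernoulliSecondMoment t = 4 / 3 := by
  simp only [bernoulliSecondMoment, intervalIntegral.integral_const_mul]
  rw [intervalIntegral.integral_add, intervalIntegral.integral_comp_sub_left fun t => t ^ 2,
    integral_pow]
  · norm_num
  all_goals exact Continuous.intervalIntegrable (by fun_prop) _ _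

theorem meanSqrtSecondMoment_nonneg : 0 ≤ meanSqrtSecondMoment :=
  intervalIntegral.integral_nonneg zero_le_one fun _ _ => Real.sqrt_nonneg _

theorem meanSqrtSecondMoment_sq_lt : meanSqrtSecondMoment ^ 2 < 4 / 3 := by
  set c := meanSqrtSecondMoment with hc
  have hh : Continuous bernoulliSecondMoment := continuous_bernoulliSecondMoment
  have hcont : Continuous fun t => √(bernoulliSecondMoment t) :=
    continuous_bernoulliSecondMoment.sqrt
  have not_constant : ∃ t ∈ Set.Icc (0 : ℝ) 1, √(bernoulliSecondMoment t) ≠ c := by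
    by_contra! h
    have h₀ := h 0 (by simp)
    have h₁ := h (1 / 2) (by norm_num)
    rw [← h₁, Real.sqrt_inj (by norm_num [bernoulliSecondMoment])
      (by norm_num [bernoulliSecondMoment])] at h₀
    norm_num [bernoulliSecondMoment] at h₀
  have variance_pos : 0 < ∫ t in (0 : ℝ)..1, (√(bernoulliSecondMoment t) - c) ^ 2 := by
    obtain ⟨t, ht, hne⟩ := not_constant
    exact intervalIntegral.integral_pos one_pos ((hcont.sub continuous_const).pow 2).continuousOn
      (fun _ _ => sq_nonneg _) ⟨t, ht, sq_pos_of_ne_zero (sub_ne_zero.2 hne)⟩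
  have variance_eq : ∫ t in (0 : ℝ)..1, (√(bernoulliSecondMoment t) - c) ^ 2 = 4 / 3 - c ^ 2 := by
    have expand (t : ℝ) : (√(bernoulliSecondMoment t) - c) ^ 2 =
        bernoulliSecondMoment t - 2 * c * √(bernoulliSecondMoment t) + c ^ 2 := by
      rw [sub_sq, Real.sq_sqrt (zero_le_one.trans (one_le_bernoulliSecondMoment t))]
      ring
    simp only [expand]
    rw [intervalIntegral.integral_add, intervalIntegral.integral_sub,
      intervalIntegral.integral_const_mul, integral_bernoulliSecondMoment,
      intervalIntegral.integral_const, ← meanSqrtSecondMoment, ← hc, smul_eq_mul]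
    · ring
    all_goals exact Continuous.intervalIntegrable (by fun_prop) _ _
  linarith

theorem setIntegral_prod_sqrt_bernoulliSecondMoment :
    ∫ x in Set.Icc (0 : ι → ℝ) 1, ∏ i, √(bernoulliSecondMoment (x i)) =
      meanSqrtSecondMoment ^ Fintype.card ι := by
  rw [← Set.pi_univ_Icc, volume_pi, Measure.restrict_pi_pi,
    integral_fintype_prod_eq_prod (f := fun _ t => √(bernoulliSecondMoment t))]
  simp only [Pi.zero_apply, Pi.one_apply, integral_Icc_eq_integral_Ioc, prod_const, card_univ,
    meanSqrtSecondMoment, intervalIntegral.integral_of_le zero_le_one]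

theorem missProb_le_indicator_add [Nonempty κ] {η : ℝ} (hη : 0 < η) (x : ι → ℝ) :
    missProb κ x ≤ (Set.Icc (fun _ => η) (fun _ => 1 - η))ᶜ.indicator 1 x +
      √(4 * Fintype.card ι ^ 3 / (η ^ 2 * Fintype.card κ)) *
        ∏ i, √(bernoulliSecondMoment (x i)) := by
  by_cases hx : x ∈ Set.Icc (fun _ => η) (fun _ => 1 - η)
  · rw [Set.indicator_of_notMem (Set.notMem_compl_iff.2 hx), zero_add]
    exact missProb_le hη hx.1 hx.2
  · rw [Set.indicator_of_mem hx, Pi.one_apply]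
    have : missProb κ x ≤ 1 := uniformProb_le_one (Ω := κ → ι → Bool) _
    exact this.trans (le_add_of_nonneg_right (by positivity))

theorem expect_volume_Icc_sdiff_boolHull_le [Nonempty κ] {η : ℝ} (hη : 0 < η) (hη' : η ≤ 1 / 2) :
    𝔼 Y : κ → ι → Bool, volume.real (Set.Icc 0 1 \ boolHull Y) ≤
      2 * η * Fintype.card ι + √(4 * Fintype.card ι ^ 3 / (η ^ 2 * Fintype.card κ)) *
        meanSqrtSecondMoment ^ Fintype.card ι := by
  let cube : Set (ι → ℝ) := Set.Icc 0 1
  let core : Set (ι → ℝ) := Set.Icc (fun _ => η) (fun _ => 1 - η)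
  let A : ℝ := √(4 * Fintype.card ι ^ 3 / (η ^ 2 * Fintype.card κ))
  have : IsFiniteMeasure (volume.restrict cube) :=
    isFiniteMeasure_restrict.2 isCompact_Icc.measure_ne_top
  have restrict_compl {s : Set (ι → ℝ)} (hs : MeasurableSet s) :
      (volume.restrict cube).real sᶜ = volume.real (cube \ s) := by
    rw [measureReal_restrict_apply hs.compl, Set.sdiff_eq, Set.inter_comm]
  have measurable_boolHull (Y : κ → ι → Bool) : MeasurableSet (boolHull Y) :=
    (isClosed_boolHull Y).measurableSet
  have integrable_indicator : Integrable (coreᶜ.indicator 1) (volume.restrict cube) :=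
    (integrable_const (1 : ℝ)).indicator measurableSet_Icc.compl
  have integrable_prod : Integrable (fun x : ι → ℝ => ∏ i, √(bernoulliSecondMoment (x i)))
      (volume.restrict cube) :=
    (continuous_finsetProd _ fun i _ => (continuous_bernoulliSecondMoment.comp
      (continuous_apply i)).sqrt).continuousOn.integrableOn_compact isCompact_Icc
  calc 𝔼 Y : κ → ι → Bool, volume.real (cube \ boolHull Y)
      = ∫ x in cube, missProb κ x := by
        simp only [← restrict_compl (measurable_boolHull _)]
        exact (integral_uniformProb_mem fun Y => (measurable_boolHull Y).compl).symm
    _ ≤ ∫ x in cube, (coreᶜ.indicator 1 x + A * ∏ i, √(bernoulliSecondMoment (x i))) :=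
        integral_mono (integrable_uniformProb_mem fun Y => (measurable_boolHull Y).compl)
          (integrable_indicator.add (integrable_prod.const_mul _)) (missProb_le_indicator_add hη)
    _ ≤ _ := by
        rw [integral_add integrable_indicator (integrable_prod.const_mul _), integral_const_mul,
          setIntegral_prod_sqrt_bernoulliSecondMoment,
          integral_indicator_one measurableSet_Icc.compl, restrict_compl measurableSet_Icc]
        gcongr ?_ + _
        exact volume_real_Icc_zero_one_sdiff_le hη.le hη'

end Volume

section Edges

theorem isExposed_convexHull_of_forall_lt {E : Type*} [AddCommGroup E] [Module ℝ E]
    [TopologicalSpace E] {X A : Set E} {m : ℝ} (hAX : A ⊆ X) (l : StrongDual ℝ E)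
    (hA : ∀ x ∈ A, l x = m) (hX : ∀ x ∈ X, x ∉ A → l x < m) :
    IsExposed ℝ (convexHull ℝ X) (convexHull ℝ A) := by
  have eq_on_face {x : E} (hx : x ∈ convexHull ℝ A) : l x = m :=
    convexHull_min hA ((convex_singleton m).linear_preimage l.toLinearMap) hx
  have convex_union : Convex ℝ ({x | l x < m} ∪ convexHull ℝ A) := by
    refine convex_iff_forall_pos.2 fun x hx y hy a b ha hb hab => ?_
    by_cases hxy : x ∈ convexHull ℝ A ∧ y ∈ convexHull ℝ A
    · exact .inr (convex_convexHull ℝ A hxy.1 hxy.2 ha.le hb.le hab)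
    · refine .inl ?_
      have hm : a * m + b * m = m := by rw [← add_mul, hab, one_mul]
      rw [Set.mem_ofPred_eq, map_add, map_smul, map_smul, smul_eq_mul, smul_eq_mul, ← hm]
      rcases hx with hx | hx <;> rcases hy with hy | hy
      · exact add_lt_add (mul_lt_mul_of_pos_left hx ha) (mul_lt_mul_of_pos_left hy hb)
      · exact add_lt_add_of_lt_of_le (mul_lt_mul_of_pos_left hx ha) (by rw [eq_on_face hy])
      · exact add_lt_add_of_le_of_lt (by rw [eq_on_face hx]) (mul_lt_mul_of_pos_left hy hb)
      · exact absurd ⟨hx, hy⟩ hxy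
  have hull_subset : convexHull ℝ X ⊆ {x | l x < m} ∪ convexHull ℝ A :=
    convexHull_min (fun x hx => or_iff_not_imp_right.2 fun hxA =>
      hX x hx fun h => hxA (subset_convexHull ℝ A h)) convex_union
  rintro hne
  obtain ⟨a, ha⟩ := convexHull_nonempty_iff.1 hne
  refine ⟨l, Set.Subset.antisymm (fun x hx => ⟨convexHull_mono hAX hx, fun y hy => ?_⟩) ?_⟩
  · rw [eq_on_face hx]
    exact (hull_subset hy).elim (fun hlt => hlt.le) fun hyA => (eq_on_face hyA).le
  · rintro x ⟨hx, hmax⟩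
    refine (hull_subset hx).resolve_left fun hlt => ?_
    exact hlt.not_ge ((hA a ha).symm.le.trans (hmax a (subset_convexHull ℝ X (hAX ha))))

variable {ι κ : Type*}

/-- The vertex `y` of the cube lies on the smallest face of the cube that contains the vertices
`v` and `w`. -/
def MemCubeFace (v w y : ι → Bool) : Prop := ∀ i, v i = w i → y i = v i

theorem memCubeFace_right (v w : ι → Bool) : MemCubeFace v w w := fun _ h => h.symm

theorem two_mul_boolPoint_sub_one_mul_lt {v y : ι → Bool} {i : ι} (h : y i ≠ v i) :
    (2 * boolPoint v i - 1) * boolPoint y i < (2 * boolPoint v i - 1) * boolPoint v i := by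
  cases hv : v i <;> cases hy : y i <;> simp_all [boolPoint]

section Functional

variable [Fintype ι]

/-- A linear functional whose maximum over the cube is attained exactly on the smallest face
containing the vertices `v` and `w`. -/
def cubeFaceFunctional (v w : ι → Bool) : StrongDual ℝ (ι → ℝ) :=
  ∑ i with v i = w i, (2 * boolPoint v i - 1) • ContinuousLinearMap.proj i

theorem cubeFaceFunctional_apply (v w : ι → Bool) (x : ι → ℝ) :
    cubeFaceFunctional v w x = ∑ i with v i = w i, (2 * boolPoint v i - 1) * x i := by
  simp only [cubeFaceFunctional, _root_.sum_apply, smul_apply,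
    ContinuousLinearMap.proj_apply, smul_eq_mul]

theorem cubeFaceFunctional_eq_of_memCubeFace {v w y : ι → Bool} (h : MemCubeFace v w y) :
    cubeFaceFunctional v w (boolPoint y) = cubeFaceFunctional v w (boolPoint v) := by
  simp only [cubeFaceFunctional_apply]
  exact sum_congr rfl fun i hi => by rw [boolPoint_apply_inj.2 (h i (mem_filter.1 hi).2)]

theorem cubeFaceFunctional_lt_of_not_memCubeFace {v w y : ι → Bool} (h : ¬MemCubeFace v w y) :
    cubeFaceFunctional v w (boolPoint y) < cubeFaceFunctional v w (boolPoint v) := by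
  obtain ⟨i, hi, hne⟩ : ∃ i, v i = w i ∧ y i ≠ v i := by
    simpa only [MemCubeFace, not_forall, exists_prop] using h
  simp only [cubeFaceFunctional_apply]
  refine sum_lt_sum (fun j _ => ?_)
    ⟨i, mem_filter.2 ⟨mem_univ i, hi⟩, two_mul_boolPoint_sub_one_mul_lt hne⟩
  by_cases hj : y j = v j
  · rw [boolPoint_apply_inj.2 hj]
  · exact (two_mul_boolPoint_sub_one_mul_lt hj).le

end Functional

theorem isExposed_boolHull_segment [Finite ι] {Y : κ → ι → Bool} {k l : κ}
    (h : ∀ m, MemCubeFace (Y k) (Y l) (Y m) → m = k ∨ m = l) :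
    IsExposed ℝ (boolHull Y) (segment ℝ (boolPoint (Y k)) (boolPoint (Y l))) := by
  cases nonempty_fintype ι
  rw [← convexHull_pair]
  refine isExposed_convexHull_of_forall_lt ?_ (cubeFaceFunctional (Y k) (Y l))
    (m := cubeFaceFunctional (Y k) (Y l) (boolPoint (Y k))) ?_ ?_
  · rintro _ (rfl | rfl)
    exacts [⟨k, rfl⟩, ⟨l, rfl⟩]
  · rintro _ (rfl | rfl)
    exacts [rfl, cubeFaceFunctional_eq_of_memCubeFace (memCubeFace_right _ _)]
  · rintro _ ⟨m, rfl⟩ hm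
    refine cubeFaceFunctional_lt_of_not_memCubeFace fun hface => hm ?_
    rcases h m hface with rfl | rfl
    exacts [.inl rfl, .inr rfl]

variable [Fintype κ]

/-- The 0/1-points of a family of Boolean vectors, as a finite set. -/
def boolPoints (Y : κ → ι → Bool) : Finset (ι → ℝ) := univ.image fun k => boolPoint (Y k)

theorem mem_boolPoints {Y : κ → ι → Bool} {x : ι → ℝ} :
    x ∈ boolPoints Y ↔ ∃ k, boolPoint (Y k) = x := by
  simp only [boolPoints, mem_image, mem_univ, true_and]

theorem coe_boolPoints (Y : κ → ι → Bool) :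
    (boolPoints Y : Set (ι → ℝ)) = Set.range fun k => boolPoint (Y k) := by
  rw [boolPoints, coe_image, coe_univ, Set.image_univ]

theorem convexHull_boolPoints (Y : κ → ι → Bool) : convexHull ℝ (boolPoints Y) = boolHull Y := by
  rw [coe_boolPoints, boolHull]

theorem card_boolPoints {Y : κ → ι → Bool} (hY : Function.Injective Y) :
    #(boolPoints Y) = Fintype.card κ :=
  card_image_of_injective _ (boolPoint_injective.comp hY)

/-- The triples of distinct indices whose third point lies on the smallest face of the cube
containing the first two: the possible obstructions to edges of `boolHull Y`. -/
def faceTriples (Y : κ → ι → Bool) : Finset (Fin 3 ↪ κ) :=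
  {e | MemCubeFace (Y (e 0)) (Y (e 1)) (Y (e 2))}

theorem choose_two_le_edgeCount_add_card_faceTriples {d : ℕ} {Y : κ → Fin d → Bool}
    (hY : Function.Injective Y) :
    (Fintype.card κ).choose 2 ≤ edgeCount (boolPoints Y) + #(faceTriples Y) := by
  have nonedge_of_triple {k l : κ} (hkl : k ≠ l)
      (hedge : ¬IsEdge (boolHull Y) (boolPoint (Y k)) (boolPoint (Y l))) :
      ∃ e ∈ faceTriples Y, e 0 = k ∧ e 1 = l := by
    obtain ⟨m, hm, hmk, hml⟩ : ∃ m, MemCubeFace (Y k) (Y l) (Y m) ∧ m ≠ k ∧ m ≠ l := by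
      by_contra! h
      exact hedge ⟨(boolPoint_injective.comp hY).ne hkl,
        isExposed_boolHull_segment fun m hm => or_iff_not_imp_left.2 (h m hm)⟩
    refine ⟨⟨![k, l, m], ?_⟩, mem_filter.2 ⟨mem_univ _, hm⟩, rfl, rfl⟩
    simp [Function.Injective, Fin.forall_fin_succ, hkl, hkl.symm, hmk, hmk.symm, hml, hml.symm]
  have card_nonedges_le : #{e ∈ (boolPoints Y).powersetCard 2 | ¬∃ v w, e = {v, w} ∧
      IsEdge (convexHull ℝ (boolPoints Y : Set (Fin d → ℝ))) v w} ≤ #(faceTriples Y) := by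
    refine (card_le_card fun s hs => ?_).trans
      (card_image_le (f := fun e => {boolPoint (Y (e 0)), boolPoint (Y (e 1))}))
    obtain ⟨hs, hedge⟩ := mem_filter.1 hs
    obtain ⟨hsub, hcard⟩ := mem_powersetCard.1 hs
    obtain ⟨p, q, hpq, rfl⟩ := card_eq_two.1 hcard
    have hp : p ∈ boolPoints Y := hsub (by simp)
    have hq : q ∈ boolPoints Y := hsub (by simp)
    obtain ⟨k, rfl⟩ := mem_boolPoints.1 hp
    obtain ⟨l, rfl⟩ := mem_boolPoints.1 hq
    have hkl : k ≠ l := fun h => hpq (by rw [h])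
    obtain ⟨e, he, rfl, rfl⟩ := nonedge_of_triple hkl fun h =>
      hedge ⟨_, _, rfl, by rwa [convexHull_boolPoints]⟩
    exact mem_image.2 ⟨e, he, rfl⟩
  calc (Fintype.card κ).choose 2 = #((boolPoints Y).powersetCard 2) := by
        rw [card_powersetCard, card_boolPoints hY]
    _ = edgeCount (boolPoints Y) + _ := (card_filter_add_card_filter_not _).symm
    _ ≤ edgeCount (boolPoints Y) + #(faceTriples Y) := Nat.add_le_add_left card_nonedges_le _

theorem one_sub_card_faceTriples_div_le_graphDensity {d : ℕ} {Y : κ → Fin d → Bool}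
    (hY : Function.Injective Y) (hκ : 2 ≤ Fintype.card κ) :
    1 - #(faceTriples Y) / ((Fintype.card κ).choose 2 : ℝ) ≤ graphDensity (boolPoints Y) := by
  have hchoose : (0 : ℝ) < (Fintype.card κ).choose 2 := Nat.cast_pos.2 (Nat.choose_pos hκ)
  rw [graphDensity, card_boolPoints hY, one_sub_div hchoose.ne']
  gcongr
  rw [sub_le_iff_le_add]
  exact_mod_cast choose_two_le_edgeCount_add_card_faceTriples hY

variable [Fintype ι]

theorem expect_card_faceTriples :
    𝔼 Y : κ → ι → Bool, (#(faceTriples Y) : ℝ) =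
      (Fintype.card κ).descFactorial 3 * (3 / 4) ^ Fintype.card ι := by
  have hprob : uniformProb (fun t : Fin 3 → Bool => t 0 = t 1 → t 2 = t 0) = 3 / 4 := by
    have hcard : #{t : Fin 3 → Bool | t 0 = t 1 → t 2 = t 0} = 6 := by decide
    rw [uniformProb_eq_card_div, hcard]
    norm_num
  have := expect_card_filter_embedding (ι := ι) (κ := κ)
    fun t : Fin 3 → Bool => t 0 = t 1 → t 2 = t 0
  rw [hprob, Fintype.card_fin] at this
  rw [← this]
  refine expect_congr rfl fun Y _ => ?_
  congr 2
  ext e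
  simp only [faceTriples, mem_filter, mem_univ, true_and]
  rfl

theorem expect_card_faceTriples_div_choose_le :
    𝔼 Y : κ → ι → Bool, #(faceTriples Y) / ((Fintype.card κ).choose 2 : ℝ) ≤
      2 * Fintype.card κ * (3 / 4) ^ Fintype.card ι := by
  have hfact : (Fintype.card κ).descFactorial 3 =
      (Fintype.card κ - 2) * (2 * (Fintype.card κ).choose 2) := by
    rw [Nat.descFactorial_succ, Nat.descFactorial_eq_factorial_mul_choose]
    rfl
  rw [← expect_div, expect_card_faceTriples, hfact]
  push_cast
  rcases eq_or_ne ((Fintype.card κ).choose 2 : ℝ) 0 with hchoose | hchoose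
  · rw [hchoose, div_zero]
    positivity
  · rw [div_le_iff₀ (by positivity)]
    have hsub : ((Fintype.card κ - 2 : ℕ) : ℝ) ≤ Fintype.card κ := Nat.cast_le.2 (Nat.sub_le _ _)
    calc _ = 2 * ((Fintype.card κ - 2 : ℕ) : ℝ) * (3 / 4) ^ Fintype.card ι *
            (Fintype.card κ).choose 2 := by ring
      _ ≤ _ := by gcongr

/-- The pairs of distinct indices at which the family `Y` takes the same value. -/
def collisions (Y : κ → ι → Bool) : Finset (Fin 2 ↪ κ) := {e | ∀ i, Y (e 0) i = Y (e 1) i}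

theorem injective_of_collisions_eq_empty {Y : κ → ι → Bool} (hY : collisions Y = ∅) :
    Function.Injective Y := by
  intro k l hkl
  by_contra hne
  let e : Fin 2 ↪ κ :=
    ⟨![k, l], by simp [Function.Injective, Fin.forall_fin_two, hne, Ne.symm hne]⟩
  have he : e ∈ collisions Y := mem_filter.2 ⟨mem_univ e, congrFun hkl⟩
  exact notMem_empty e (hY ▸ he)

theorem expect_card_collisions_le :
    𝔼 Y : κ → ι → Bool, (#(collisions Y) : ℝ) ≤
      Fintype.card κ ^ 2 * (1 / 2) ^ Fintype.card ι := by
  have hprob : uniformProb (fun t : Fin 2 → Bool => t 0 = t 1) = 1 / 2 := by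
    have hcard : #{t : Fin 2 → Bool | t 0 = t 1} = 2 := by decide
    rw [uniformProb_eq_card_div, hcard]
    norm_num
  have hexpect := expect_card_filter_embedding (ι := ι) (κ := κ) fun t : Fin 2 → Bool => t 0 = t 1
  rw [hprob, Fintype.card_fin] at hexpect
  calc 𝔼 Y : κ → ι → Bool, (#(collisions Y) : ℝ)
      = (Fintype.card κ).descFactorial 2 * (1 / 2) ^ Fintype.card ι := by
        rw [← hexpect]
        refine expect_congr rfl fun Y _ => ?_
        congr 2
        ext e
        simp only [collisions, mem_filter, mem_univ, true_and]
    _ ≤ Fintype.card κ ^ 2 * (1 / 2) ^ Fintype.card ι := by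
        gcongr
        exact_mod_cast Nat.descFactorial_le_pow _ 2

end Edges

section GoodSamples

theorem affineSpan_eq_top_of_measure_convexHull_ne_zero {E : Type*} [NormedAddCommGroup E]
    [NormedSpace ℝ E] [MeasurableSpace E] [BorelSpace E] [FiniteDimensional ℝ E] (μ : Measure E)
    [μ.IsAddHaarMeasure] {X : Set E} (hX : μ (convexHull ℝ X) ≠ 0) : affineSpan ℝ X = ⊤ := by
  by_contra hspan
  exact hX (measure_mono_null (convexHull_subset_affineSpan X)
    (Measure.addHaar_affineSubspace μ _ hspan))

theorem volume_real_boolHull {ι κ : Type*} [Fintype ι] [Finite κ] (Y : κ → ι → Bool) :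
    volume.real (boolHull Y) = 1 - volume.real (Set.Icc 0 1 \ boolHull Y) := by
  rw [measureReal_sdiff (boolHull_subset_Icc Y) (isClosed_boolHull Y).measurableSet
      isCompact_Icc.measure_ne_top,
    volume_real_Icc_zero_one, sub_sub_cancel]

theorem boolPoints_subset_cube01 {κ : Type*} [Fintype κ] {d : ℕ} (Y : κ → Fin d → Bool) :
    boolPoints Y ⊆ cube01 d := by
  intro x hx
  obtain ⟨k, rfl⟩ := mem_boolPoints.1 hx
  exact mem_image_of_mem _ (mem_univ (Y k))

variable {ι κ : Type*} [Fintype ι] [Fintype κ]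

/-- The total defect of the sample `Y`: the number of its collisions, plus an upper bound for the
proportion of its pairs that are not edges, plus the volume of the cube that its hull misses. -/
def sampleDefect (Y : κ → ι → Bool) : ℝ :=
  #(collisions Y) + #(faceTriples Y) / ((Fintype.card κ).choose 2 : ℝ) +
    volume.real (Set.Icc 0 1 \ boolHull Y)

/-- A bound for the expected defect of `N` uniform points of the `d`-cube, with `c` in the role of
`meanSqrtSecondMoment`; the points within `η` of the boundary of the cube are counted as missed. -/
def defectBound (c η : ℝ) (d N : ℕ) : ℝ :=
  N ^ 2 * (1 / 2) ^ d + 2 * N * (3 / 4) ^ d + (2 * η * d + √(4 * d ^ 3 / (η ^ 2 * N)) * c ^ d)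

theorem expect_sampleDefect_le [Nonempty κ] {η : ℝ} (hη : 0 < η) (hη' : η ≤ 1 / 2) :
    𝔼 Y : κ → ι → Bool, sampleDefect Y ≤
      defectBound meanSqrtSecondMoment η (Fintype.card ι) (Fintype.card κ) := by
  simp only [sampleDefect, expect_add_distrib]
  exact add_le_add (add_le_add expect_card_collisions_le expect_card_faceTriples_div_choose_le)
    (expect_volume_Icc_sdiff_boolHull_le hη hη')

theorem exists_sampleDefect_lt [Nonempty κ] {η ε : ℝ} (hη : 0 < η) (hη' : η ≤ 1 / 2)
    (hε : defectBound meanSqrtSecondMoment η (Fintype.card ι) (Fintype.card κ) < ε) :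
    ∃ Y : κ → ι → Bool, sampleDefect Y < ε := by
  obtain ⟨Y, -, hY⟩ := exists_lt_of_expect_lt univ_nonempty
    ((expect_sampleDefect_le hη hη').trans_lt hε)
  exact ⟨Y, hY⟩

theorem injective_of_sampleDefect_lt_one {Y : κ → ι → Bool} (hY : sampleDefect Y < 1) :
    Function.Injective Y := by
  have hcard : (#(collisions Y) : ℝ) < 1 :=
    (le_add_of_nonneg_right (by positivity)).trans_lt ((add_assoc _ _ _).symm.trans_lt hY)
  exact injective_of_collisions_eq_empty (card_eq_zero.1 (Nat.lt_one_iff.1 (mod_cast hcard)))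

theorem one_sub_sampleDefect_le_volume_real (Y : κ → ι → Bool) :
    1 - sampleDefect Y ≤ volume.real (boolHull Y) := by
  rw [volume_real_boolHull]
  exact sub_le_sub_left (le_add_of_nonneg_left (by positivity)) 1

theorem one_sub_sampleDefect_le_graphDensity {d : ℕ} {Y : κ → Fin d → Bool}
    (hY : Function.Injective Y) (hκ : 2 ≤ Fintype.card κ) :
    1 - sampleDefect Y ≤ graphDensity (boolPoints Y) := by
  refine le_trans (sub_le_sub_left ?_ 1) (one_sub_card_faceTriples_div_le_graphDensity hY hκ)
  exact (le_add_of_nonneg_left (Nat.cast_nonneg _)).trans (le_add_of_nonneg_right (by positivity))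

end GoodSamples

section Asymptotics

theorem natCeil_pow_le_two_mul_pow {r : ℝ} (hr : 1 ≤ r) (d : ℕ) :
    (⌈r ^ d⌉₊ : ℝ) ≤ 2 * r ^ d := by
  have hpow := one_le_pow₀ hr (n := d)
  linarith [Nat.ceil_lt_add_one (zero_le_one.trans hpow)]

theorem sqrt_mul_pow_le {c r : ℝ} (hc : 0 ≤ c) (hr : 0 < r) (d : ℕ) :
    √(4 * d ^ 3 / ((1 / d ^ 2) ^ 2 * ⌈r ^ d⌉₊)) * c ^ d ≤ √(4 * (d ^ 7 * (c ^ 2 / r) ^ d)) := by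
  rw [← Real.sqrt_sq (pow_nonneg hc d), ← Real.sqrt_mul (by positivity)]
  refine Real.sqrt_le_sqrt ?_
  calc 4 * (d : ℝ) ^ 3 / ((1 / d ^ 2) ^ 2 * ⌈r ^ d⌉₊) * (c ^ d) ^ 2
      = 4 * (d ^ 7 * (c ^ 2) ^ d) / ⌈r ^ d⌉₊ := by
        rw [pow_right_comm c, one_div, inv_pow, ← div_div, div_inv_eq_mul]
        ring
    _ ≤ 4 * (d ^ 7 * (c ^ 2) ^ d) / r ^ d := by
        gcongr
        exact Nat.le_ceil _
    _ = 4 * (d ^ 7 * (c ^ 2 / r) ^ d) := by rw [div_pow]; ring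

theorem tendsto_defectBound {c r : ℝ} (hc : 0 ≤ c) (hr : 1 < r) (hcr : c ^ 2 < r)
    (hr' : r < 4 / 3) :
    Tendsto (fun d : ℕ => defectBound c (1 / d ^ 2) d ⌈r ^ d⌉₊) atTop (𝓝 0) := by
  have hr0 : 0 < r := one_pos.trans hr
  have tendsto_pow {q : ℝ} (hq : 0 ≤ q) (hq' : q < 1) :
      Tendsto (fun d : ℕ => 4 * q ^ d) atTop (𝓝 0) := by
    simpa using (tendsto_pow_atTop_nhds_zero_of_lt_one hq hq').const_mul 4
  have collision_term : Tendsto (fun d : ℕ => (⌈r ^ d⌉₊ : ℝ) ^ 2 * (1 / 2) ^ d) atTop (𝓝 0) := by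
    refine squeeze_zero (fun d => by positivity) (fun d => ?_)
      (tendsto_pow (q := r ^ 2 * (1 / 2)) (by positivity) (by nlinarith))
    calc (⌈r ^ d⌉₊ : ℝ) ^ 2 * (1 / 2) ^ d ≤ (2 * r ^ d) ^ 2 * (1 / 2) ^ d := by
          gcongr
          exact natCeil_pow_le_two_mul_pow hr.le d
      _ = 4 * (r ^ 2 * (1 / 2)) ^ d := by rw [mul_pow, mul_pow, pow_right_comm]; ring
  have triple_term : Tendsto (fun d : ℕ => 2 * (⌈r ^ d⌉₊ : ℝ) * (3 / 4) ^ d) atTop (𝓝 0) := by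
    refine squeeze_zero (fun d => by positivity) (fun d => ?_)
      (tendsto_pow (q := r * (3 / 4)) (by positivity) (by linarith))
    calc 2 * (⌈r ^ d⌉₊ : ℝ) * (3 / 4) ^ d ≤ 2 * (2 * r ^ d) * (3 / 4) ^ d := by
          gcongr
          exact natCeil_pow_le_two_mul_pow hr.le d
      _ = 4 * (r * (3 / 4)) ^ d := by rw [mul_pow]; ring
  have boundary_term : Tendsto (fun d : ℕ => 2 * (1 / (d : ℝ) ^ 2) * d) atTop (𝓝 0) := by
    refine (by simpa using tendsto_one_div_atTop_nhds_zero_nat.const_mul (2 : ℝ) :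
      Tendsto (fun d : ℕ => 2 * (1 / (d : ℝ))) atTop (𝓝 0)).congr fun d => ?_
    rcases eq_or_ne (d : ℝ) 0 with hd | hd
    · simp only [hd, mul_zero, div_zero]
    · field_simp
  have moment_term : Tendsto
      (fun d : ℕ => √(4 * d ^ 3 / ((1 / d ^ 2) ^ 2 * ⌈r ^ d⌉₊)) * c ^ d) atTop (𝓝 0) := by
    refine squeeze_zero (fun d => by positivity) (sqrt_mul_pow_le hc hr0) ?_
    have hq : |c ^ 2 / r| < 1 := by rwa [abs_of_nonneg (by positivity), div_lt_one hr0]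
    simpa using ((tendsto_pow_const_mul_const_pow_of_abs_lt_one 7 hq).const_mul 4).sqrt
  simpa [defectBound] using (collision_term.add triple_term).add (boundary_term.add moment_term)

end Asymptotics

theorem statement2_general (δ : ℝ) (hδ : 0 < δ) :
    ∀ᶠ d : ℕ in atTop, ∃ X : Finset (Fin d → ℝ), X ⊆ cube01 d ∧
        affineSpan ℝ (X : Set (Fin d → ℝ)) = ⊤ ∧
        1 - δ ≤ graphDensity X ∧
        ENNReal.ofReal (1 - δ) ≤ volume (convexHull ℝ (X : Set (Fin d → ℝ))) := by
  obtain ⟨r, hr, hr'⟩ := exists_between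
    (max_lt (by norm_num : (1 : ℝ) < 4 / 3) meanSqrtSecondMoment_sq_lt)
  obtain ⟨hr₁, hcr⟩ := max_lt_iff.1 hr
  filter_upwards [eventually_ge_atTop 2, (tendsto_defectBound meanSqrtSecondMoment_nonneg hr₁ hcr
    hr').eventually_lt_const (lt_min hδ one_pos)] with d hd hbound
  have hN : 2 ≤ ⌈r ^ d⌉₊ := Nat.lt_ceil.2 (by exact_mod_cast one_lt_pow₀ hr₁ (by omega))
  have : Nonempty (Fin ⌈r ^ d⌉₊) := ⟨⟨0, by omega⟩⟩
  have hη : 1 / (d : ℝ) ^ 2 ≤ 1 / 2 := by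
    have : (2 : ℝ) ≤ d := mod_cast hd
    gcongr
    nlinarith
  obtain ⟨Y, hY⟩ := exists_sampleDefect_lt (ι := Fin d) (κ := Fin ⌈r ^ d⌉₊) (by positivity) hη
    (by simpa only [Fintype.card_fin] using hbound)
  obtain ⟨hYδ, hY₁⟩ := lt_min_iff.1 hY
  have hvolume := one_sub_sampleDefect_le_volume_real Y
  have hgraph := one_sub_sampleDefect_le_graphDensity (injective_of_sampleDefect_lt_one hY₁)
    (by rwa [Fintype.card_fin])
  rw [measureReal_def, ← convexHull_boolPoints] at hvolume
  refine ⟨boolPoints Y, boolPoints_subset_cube01 Y, ?_, by linarith,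
    ENNReal.ofReal_le_of_le_toReal (by linarith)⟩
  exact affineSpan_eq_top_of_measure_convexHull_ne_zero volume
    (ENNReal.toReal_pos_iff.1 (by linarith)).1.ne'

-- STATEMENT 2
theorem statement2 (δ : ℝ) (hδ : 0 < δ) :
    {d : ℕ | ∃ X : Finset (Fin d → ℝ), X ⊆ cube01 d ∧
        affineSpan ℝ (X : Set (Fin d → ℝ)) = ⊤ ∧
        1 - δ ≤ graphDensity X ∧
        ENNReal.ofReal (1 - δ) ≤ volume (convexHull ℝ (X : Set (Fin d → ℝ)))}.Infinite :=
  Nat.frequently_atTop_iff_infinite.1 (statement2_general δ hδ).frequently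

end
end

section
/- Let P ⊂ ℝ^d be a ±1-polytope (the convex hull of a subset of {−1,+1}^d) and let v, w be two distinct vertices of P. Then {v,w} is an edge (one-dimensional face) of P if and only if conv{v,w} ∩ conv(V(P) ∩ C_*(v,w)) = ∅, where V(P) is the vertex set of P. -/
open Finset Filter MeasureTheory

open scoped Classical

noncomputable section

/-!
Let `A` be a finite set of extreme points of `conv A` and `v, w ∈ A`. Then `conv {v, w}` is a face
of `conv A` as soon as it misses `conv (A \ {v, w})`: the line through the extreme points `v, w`
meets `conv A` only in `conv {v, w}`, so Hahn-Banach separates the whole line from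
`conv (A \ {v, w})`, and the separating functional, being bounded below on the line, is constant
there. Conversely, a face absorbs the points of any convex combination that lands in it.

For `±1`-points the latter remark also reduces `A \ {v, w}` to `A ∩ C_*(v, w)`: the box
`∏ᵢ conv {vᵢ, wᵢ} = conv C(v, w)` is a face of the cube containing `conv {v, w}`.
-/

section Extreme

lemma inter_convexHull_subset_of_isExtreme {𝕜 E : Type*} [Semiring 𝕜] [PartialOrder 𝕜]
    [ZeroLEOneClass 𝕜] [AddCommMonoid E] [Module 𝕜 E] {K F A : Set E} (hK : Convex 𝕜 K)
    (hF : IsExtreme 𝕜 K F) (hA : A ⊆ K) : F ∩ convexHull 𝕜 A ⊆ convexHull 𝕜 (A ∩ F) := by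
  suffices h : convexHull 𝕜 A ⊆ {x | x ∈ K ∧ (x ∈ F → x ∈ convexHull 𝕜 (A ∩ F))} from
    fun x hx => (h hx.2).2 hx.1
  refine convexHull_min (fun x hx => ⟨hA hx, fun hxF => subset_convexHull 𝕜 _ ⟨hx, hxF⟩⟩)
    (convex_iff_openSegment_subset.2 fun x hx y hy z hz =>
      ⟨hK.openSegment_subset hx.1 hy.1 hz, fun hzF => ?_⟩)
  exact (convex_convexHull 𝕜 _).openSegment_subset
    (hx.2 (hF.left_mem_of_mem_openSegment hx.1 hy.1 hzF hz))
    (hy.2 (hF.right_mem_of_mem_openSegment hx.1 hy.1 hzF hz)) hz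

lemma isExtreme_univ_pi {𝕜 ι : Type*} {E : ι → Type*} [Semiring 𝕜] [PartialOrder 𝕜]
    [∀ i, AddCommMonoid (E i)] [∀ i, Module 𝕜 (E i)] {s t : ∀ i, Set (E i)}
    (h : ∀ i, IsExtreme 𝕜 (s i) (t i)) :
    IsExtreme 𝕜 (Set.univ.pi s) (Set.univ.pi t) where
  subset := Set.pi_mono fun i _ => (h i).subset
  left_mem_of_mem_openSegment x hx y hy _ hz hzxy i hi :=
    (h i).left_mem_of_mem_openSegment (hx i hi) (hy i hi) (hz i hi)
      (Pi.openSegment_subset (s := Set.univ) x y hzxy i hi)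

variable {𝕜 E : Type*} [Field 𝕜] [LinearOrder 𝕜] [IsStrictOrderedRing 𝕜]
  [AddCommGroup E] [Module 𝕜 E]

lemma inter_line_subset_segment {K : Set E} {v w : E} (hv : v ∈ K.extremePoints 𝕜)
    (hw : w ∈ K.extremePoints 𝕜) : K ∩ line[𝕜, v, w] ⊆ segment 𝕜 v w := by
  rintro p ⟨hpK, hp⟩
  obtain rfl | hvw := eq_or_ne v w
  · simpa using hp
  have hcol := collinear_insert_of_mem_affineSpan_pair hp
  obtain h | h | h := hcol.wbtw_or_wbtw_or_wbtw
  · obtain rfl | rfl := (mem_extremePoints_iff_forall_segment.1 hv).2 p hpK w hw.1 h.mem_segment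
    · exact left_mem_segment 𝕜 _ _
    · exact absurd rfl hvw
  · obtain rfl | rfl := (mem_extremePoints_iff_forall_segment.1 hw).2 v hv.1 p hpK h.mem_segment
    · exact absurd rfl hvw
    · exact right_mem_segment 𝕜 _ _
  · exact h.symm.mem_segment

lemma isExtreme_segment_of_mem_extremePoints {I : Set 𝕜} (hI : Convex 𝕜 I) {a b : 𝕜}
    (ha : a ∈ I.extremePoints 𝕜) (hb : b ∈ I.extremePoints 𝕜) :
    IsExtreme 𝕜 I (segment 𝕜 a b) := by
  obtain rfl | hab := eq_or_ne a b
  · rwa [segment_same, isExtreme_singleton]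
  have hline (x : 𝕜) : x ∈ line[𝕜, a, b] := by
    refine mem_affineSpan_pair_iff_exists_lineMap_eq.2 ⟨(x - a) / (b - a), ?_⟩
    rw [AffineMap.lineMap_apply_ring', div_mul_cancel₀ _ (sub_ne_zero.2 hab.symm), sub_add_cancel]
  have hseg : segment 𝕜 a b = I := (hI.segment_subset ha.1 hb.1).antisymm
    fun x hx => inter_line_subset_segment ha hb ⟨hx, hline x⟩
  rw [hseg]

lemma isExtreme_univ_pi_segment {ι : Type*} {I : ι → Set 𝕜} (hI : ∀ i, Convex 𝕜 (I i))
    {v w : ι → 𝕜} (hv : v ∈ (Set.univ.pi I).extremePoints 𝕜)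
    (hw : w ∈ (Set.univ.pi I).extremePoints 𝕜) :
    IsExtreme 𝕜 (Set.univ.pi I) (Set.univ.pi fun i => segment 𝕜 (v i) (w i)) := by
  rw [extremePoints_pi] at hv hw
  exact isExtreme_univ_pi fun i =>
    isExtreme_segment_of_mem_extremePoints (hI i) (hv i trivial) (hw i trivial)

lemma pair_subset_extremePoints_Icc {a b : 𝕜} (hab : a ≤ b) :
    {a, b} ⊆ (Set.Icc a b).extremePoints 𝕜 := by
  rintro c (rfl | rfl)
  · refine mem_extremePoints_iff_forall_segment.2
      ⟨Set.left_mem_Icc.2 hab, fun x hx y hy hc => ?_⟩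
    rw [segment_eq_Icc'] at hc
    exact (min_le_iff.1 hc.1).imp hx.1.antisymm' hy.1.antisymm'
  · refine mem_extremePoints_iff_forall_segment.2
      ⟨Set.right_mem_Icc.2 hab, fun x hx y hy hc => ?_⟩
    rw [segment_eq_Icc'] at hc
    exact (le_max_iff.1 hc.2).imp hx.2.antisymm hy.2.antisymm

end Extreme

section Exposed

lemma map_eq_map_of_forall_mem_line_lt {𝕜 E : Type*} [Field 𝕜] [Preorder 𝕜] [AddCommGroup E]
    [Module 𝕜 E] {f : E →ₗ[𝕜] 𝕜} {v w : E} {b : 𝕜}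
    (hf : ∀ x ∈ line[𝕜, v, w], b < f x) : f v = f w := by
  by_contra hne
  have h := hf _ (AffineMap.lineMap_mem_affineSpan_pair ((b - f v) / (f w - f v)) v w)
  rw [AffineMap.lineMap_apply_module', map_add, map_smul, map_sub, smul_eq_mul,
    div_mul_cancel₀ _ (sub_ne_zero.2 (Ne.symm hne)), sub_add_cancel] at h
  exact h.false

section OrderedField

variable {𝕜 E : Type*} [Field 𝕜] [LinearOrder 𝕜] [IsStrictOrderedRing 𝕜]
  [AddCommGroup E] [Module 𝕜 E] [TopologicalSpace 𝕜] [TopologicalSpace E]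

lemma isExposed_convexHull_of_forall_lt_s3 {A T : Set E} (hTA : T ⊆ A) (f : StrongDual 𝕜 E) {c : 𝕜}
    (hT : ∀ x ∈ T, f x = c) (hA : ∀ x ∈ A \ T, f x < c) :
    IsExposed 𝕜 (convexHull 𝕜 A) (convexHull 𝕜 T) := by
  rintro ⟨_, hne⟩
  obtain ⟨t, ht⟩ := convexHull_nonempty_iff.1 ⟨_, hne⟩
  have hexp : IsExposed 𝕜 (convexHull 𝕜 A) (f.toExposed (convexHull 𝕜 A)) :=
    ContinuousLinearMap.toExposed.isExposed
  have hconv := convex_convexHull 𝕜 A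
  have hle : ∀ x ∈ convexHull 𝕜 A, f x ≤ c := by
    refine convexHull_min (fun x hx => ?_) (convex_halfSpace_le f.toLinearMap.isLinear c)
    by_cases hxT : x ∈ T
    exacts [(hT x hxT).le, (hA x ⟨hx, hxT⟩).le]
  refine ⟨f, Set.Subset.antisymm (convexHull_min (fun x hx => ?_) (hexp.convex hconv)) ?_⟩
  · exact ⟨subset_convexHull 𝕜 A (hTA hx), fun y hy => (hle y hy).trans (hT x hx).ge⟩
  · intro x hx
    refine convexHull_mono (fun y hy => ?_) (inter_convexHull_subset_of_isExtreme hconv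
      hexp.isExtreme (subset_convexHull 𝕜 A) ⟨hx, hx.1⟩)
    by_contra hyT
    have hty : f t ≤ f y := hy.2.2 t (subset_convexHull 𝕜 A (hTA ht))
    exact ((hA y ⟨hy.1, hyT⟩).trans_le (hT t ht).ge).not_ge hty

lemma disjoint_segment_convexHull_sdiff_of_isExposed {A : Set E}
    (hA : A ⊆ (convexHull 𝕜 A).extremePoints 𝕜) {v w : E} (hv : v ∈ A) (hw : w ∈ A)
    (h : IsExposed 𝕜 (convexHull 𝕜 A) (segment 𝕜 v w)) :
    Disjoint (segment 𝕜 v w) (convexHull 𝕜 (A \ {v, w})) := by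
  have hempty : (A \ {v, w}) ∩ segment 𝕜 v w = ∅ := by
    refine Set.eq_empty_of_forall_notMem fun y hy => hy.1.2 ?_
    obtain h | h := (mem_extremePoints_iff_forall_segment.1 (hA hy.1.1)).2
      v (subset_convexHull 𝕜 A hv) w (subset_convexHull 𝕜 A hw) hy.2
    exacts [Or.inl h.symm, Or.inr h.symm]
  have hsub := inter_convexHull_subset_of_isExtreme (convex_convexHull 𝕜 A) h.isExtreme
    (Set.sdiff_subset.trans (subset_convexHull 𝕜 A) : A \ {v, w} ⊆ _)
  rwa [hempty, convexHull_empty, Set.subset_empty_iff, ← Set.disjoint_iff_inter_eq_empty] at hsub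

end OrderedField

variable {E : Type*} [AddCommGroup E] [Module ℝ E] [TopologicalSpace E]
  [IsTopologicalAddGroup E] [ContinuousSMul ℝ E] [LocallyConvexSpace ℝ E] [T2Space E]

lemma isExposed_segment_of_disjoint {A : Set E} (hfin : A.Finite) {v w : E}
    (hv : v ∈ (convexHull ℝ A).extremePoints ℝ) (hw : w ∈ (convexHull ℝ A).extremePoints ℝ)
    (h : Disjoint (segment ℝ v w) (convexHull ℝ (A \ {v, w}))) :
    IsExposed ℝ (convexHull ℝ A) (segment ℝ v w) := by
  have hline : Disjoint (convexHull ℝ (A \ {v, w})) line[ℝ, v, w] :=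
    Set.disjoint_left.2 fun p hp hpl => Set.disjoint_left.1 h
      (inter_line_subset_segment hv hw ⟨convexHull_mono Set.sdiff_subset hp, hpl⟩) hp
  have hclosed : IsClosed (line[ℝ, v, w] : Set E) :=
    (AffineSubspace.isClosed_direction_iff _).1 (Submodule.closed_of_finiteDimensional _)
  obtain ⟨f, a, b, hfa, hab, hfb⟩ := geometric_hahn_banach_compact_closed
    (convex_convexHull ℝ _) (hfin.sdiff.isCompact_convexHull ℝ)
    (line[ℝ, v, w]).convex hclosed hline
  have hfvw : f v = f w := map_eq_map_of_forall_mem_line_lt (f := f.toLinearMap) hfb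
  rw [← convexHull_pair]
  refine isExposed_convexHull_of_forall_lt_s3 (c := f v) ?_ f ?_ fun x hx => ?_
  · exact Set.pair_subset (extremePoints_convexHull_subset hv) (extremePoints_convexHull_subset hw)
  · rintro x (rfl | rfl)
    exacts [rfl, hfvw.symm]
  · exact (hfa x (subset_convexHull ℝ _ hx)).trans
      (hab.trans (hfb v (left_mem_affineSpan_pair ℝ v w)))

theorem isExposed_segment_iff_disjoint {A : Set E} (hfin : A.Finite)
    (hA : A ⊆ (convexHull ℝ A).extremePoints ℝ) {v w : E} (hv : v ∈ A) (hw : w ∈ A) :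
    IsExposed ℝ (convexHull ℝ A) (segment ℝ v w) ↔
      Disjoint (segment ℝ v w) (convexHull ℝ (A \ {v, w})) :=
  ⟨disjoint_segment_convexHull_sdiff_of_isExposed hA hv hw,
    isExposed_segment_of_disjoint hfin (hA hv) (hA hw)⟩

end Exposed

section Cube

variable {d : ℕ}

lemma pmCube_subset_extremePoints :
    (pmCube d : Set (Fin d → ℝ)) ⊆ (Set.univ.pi fun _ => Set.Icc (-1) 1).extremePoints ℝ := by
  intro x hx
  obtain ⟨f, -, rfl⟩ := Finset.mem_image.1 hx
  rw [extremePoints_pi]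
  refine fun i _ => pair_subset_extremePoints_Icc (by norm_num) ?_
  cases h : f i <;> simp [h]

lemma subset_extremePoints_convexHull_of_subset_pmCube {A : Set (Fin d → ℝ)}
    (hA : A ⊆ pmCube d) : A ⊆ (convexHull ℝ A).extremePoints ℝ := fun _ hx =>
  have hA' := hA.trans pmCube_subset_extremePoints
  inter_extremePoints_subset_extremePoints_of_subset
    (convexHull_min (hA'.trans extremePoints_subset) (convex_pi fun _ _ => convex_Icc _ _))
    ⟨subset_convexHull ℝ A hx, hA' hx⟩

lemma mem_cubeFace_of_mem_univ_pi_segment {v w x : Fin d → ℝ} (hx : x ∈ pmCube d)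
    (h : x ∈ Set.univ.pi fun i => segment ℝ (v i) (w i)) : x ∈ cubeFace v w := by
  refine Finset.mem_filter.2 ⟨hx, fun i hi => ?_⟩
  simpa [hi] using h i trivial

lemma disjoint_segment_convexHull_sdiff_iff_inter_cubeFaceStar {S : Finset (Fin d → ℝ)}
    (hS : S ⊆ pmCube d) {v w : Fin d → ℝ} (hv : v ∈ pmCube d) (hw : w ∈ pmCube d) :
    Disjoint (segment ℝ v w) (convexHull ℝ ((S : Set (Fin d → ℝ)) \ {v, w})) ↔
      Disjoint (segment ℝ v w)
        (convexHull ℝ ((S ∩ cubeFaceStar v w : Finset (Fin d → ℝ)) : Set (Fin d → ℝ))) := by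
  constructor
  · refine fun h => h.mono_right (convexHull_mono fun x hx => ?_)
    simp only [Finset.mem_coe, Finset.mem_inter, cubeFaceStar, Finset.mem_sdiff] at hx
    exact ⟨hx.1, by simpa using hx.2.2⟩
  · refine fun h => Set.disjoint_left.2 fun p hp hpS => Set.disjoint_left.1 h hp ?_
    have hbox : (S : Set (Fin d → ℝ)) \ {v, w} ⊆ Set.univ.pi fun _ => Set.Icc (-1) 1 :=
      fun _ hx => (pmCube_subset_extremePoints (hS hx.1)).1
    have hface := isExtreme_univ_pi_segment (fun _ => convex_Icc (-1 : ℝ) 1)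
      (pmCube_subset_extremePoints hv) (pmCube_subset_extremePoints hw)
    refine convexHull_mono (fun x hx => ?_) (inter_convexHull_subset_of_isExtreme
      (convex_pi fun _ _ => convex_Icc _ _) hface hbox ⟨Pi.segment_subset v w hp, hpS⟩)
    have hxF := mem_cubeFace_of_mem_univ_pi_segment (hS hx.1.1) hx.2
    exact Finset.mem_inter.2 ⟨hx.1.1, Finset.mem_sdiff.2 ⟨hxF, by simpa using hx.1.2⟩⟩

end Cube

-- STATEMENT 3
theorem statement3 {d : ℕ} (S : Finset (Fin d → ℝ)) (hS : S ⊆ pmCube d)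
    (v w : Fin d → ℝ) (hv : v ∈ S) (hw : w ∈ S) (hvw : v ≠ w) :
    IsEdge (convexHull ℝ (S : Set (Fin d → ℝ))) v w ↔
      segment ℝ v w ∩
        convexHull ℝ ((S ∩ cubeFaceStar v w : Finset (Fin d → ℝ)) : Set (Fin d → ℝ)) = ∅ := by
  have hextreme := subset_extremePoints_convexHull_of_subset_pmCube (Finset.coe_subset.2 hS)
  rw [IsEdge, and_iff_right hvw, isExposed_segment_iff_disjoint S.finite_toSet hextreme hv hw,
    disjoint_segment_convexHull_sdiff_iff_inter_cubeFaceStar hS (hS hv) (hS hw),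
    Set.disjoint_iff_inter_eq_empty]

end
end

section
/- For all k and all m with 0 ≤ m ≤ 2^k − 2: τ(k,m) = [C(2^{k−1} − 1, m) · 2^m / C(2^k − 2, m)] · α(k,m), where C(a,b) denotes the binomial coefficient. -/
open Finset Filter MeasureTheory

open scoped Classical

noncomputable section

/-!
If `y` and `-y` both lie in `Y`, then `0 ∈ conv Y ∩ [-𝟙, 𝟙]`. Hence the event of `τ(k,m)` is
contained in the event `Y ∩ (-Y) = ∅` on which `α(k,m)` conditions, and `τ(k,m)` is `α(k,m)` times
the probability of the latter. The set `C^k_*` splits into `2^{k-1} - 1` antipodal pairs, and an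
`m`-subset without antipodal pairs amounts to a choice of `m` of these pairs and of one point in
each.
-/

theorem card_filter_div_card_eq_mul_of_imp {ι K : Type*} [Field K] [CharZero K] (s : Finset ι)
    {p q : ι → Prop} [DecidablePred p] [DecidablePred q] (h : ∀ x ∈ s, p x → q x) :
    (#{x ∈ s | p x} / #s : K) = #{x ∈ s | q x} / #s * (#{x ∈ s | p x ∧ q x} / #{x ∈ s | q x}) := by
  have hpq : {x ∈ s | p x ∧ q x} = {x ∈ s | p x} :=
    filter_congr fun x hx => and_iff_left_of_imp (h x hx)
  have hzero : (#{x ∈ s | q x} : K) = 0 → (#{x ∈ s | p x} : K) = 0 := by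
    simp only [Nat.cast_eq_zero, card_eq_zero, filter_eq_empty_iff]
    exact fun hq x hx hp => hq hx (h x hx hp)
  rw [hpq, div_mul_eq_mul_div, mul_div_cancel_of_imp' hzero]

section AntipodalFree

open scoped Pointwise

variable {α : Type*} [DecidableEq α] [InvolutiveNeg α]

/-- The set obtained from `T` by negating its elements outside `U ⊆ T`. When `T` is disjoint from
`-T`, letting `U` vary gives every choice of one point in each pair `{t, -t}` with `t ∈ T`. -/
def negOutside (T U : Finset α) : Finset α := U ∪ -(T \ U)

theorem mem_negOutside {T U : Finset α} {x : α} :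
    x ∈ negOutside T U ↔ x ∈ U ∨ -x ∈ T ∧ -x ∉ U := by
  simp only [negOutside, mem_union, mem_neg', Finset.mem_sdiff]

theorem disjoint_neg_iff {Y : Finset α} : Disjoint Y (-Y) ↔ ∀ y ∈ Y, -y ∉ Y := by
  simp only [disjoint_left, mem_neg']

variable {H T U Y : Finset α}

theorem negOutside_subset (hTH : T ⊆ H) (hUT : U ⊆ T) : negOutside T U ⊆ H ∪ -H :=
  union_subset_union (hUT.trans hTH) (neg_subset_neg (sdiff_subset.trans hTH))

theorem card_negOutside (hT : Disjoint T (-T)) (hUT : U ⊆ T) : #(negOutside T U) = #T := by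
  have hdisj : Disjoint U (-(T \ U)) := hT.mono hUT (neg_subset_neg sdiff_subset)
  rw [negOutside, card_union_of_disjoint hdisj, card_neg, add_comm, card_sdiff_add_card_eq_card hUT]

theorem disjoint_neg_negOutside (hT : Disjoint T (-T)) (hUT : U ⊆ T) :
    Disjoint (negOutside T U) (-negOutside T U) := by
  simp only [disjoint_neg_iff, mem_negOutside, neg_neg] at hT ⊢
  grind

theorem inter_negOutside (hH : Disjoint H (-H)) (hTH : T ⊆ H) (hUT : U ⊆ T) :
    H ∩ negOutside T U = U := by
  rw [disjoint_neg_iff] at hH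
  ext x
  simp only [mem_inter, mem_negOutside]
  grind

theorem inter_negOutside_union_neg_negOutside (hH : Disjoint H (-H)) (hTH : T ⊆ H) (hUT : U ⊆ T) :
    H ∩ (negOutside T U ∪ -negOutside T U) = T := by
  rw [disjoint_neg_iff] at hH
  ext x
  simp only [mem_inter, mem_union, mem_neg', mem_negOutside, neg_neg]
  grind

theorem negOutside_inter_union_neg_inter (hY : Y ⊆ H ∪ -H) (hYneg : Disjoint Y (-Y)) :
    negOutside (H ∩ (Y ∪ -Y)) (H ∩ Y) = Y := by
  rw [disjoint_neg_iff] at hYneg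
  ext x
  have hx := @hY x
  simp only [mem_union, mem_neg', mem_negOutside, mem_inter, neg_neg] at hx ⊢
  grind

theorem card_filter_disjoint_neg_powersetCard_union_neg (hH : Disjoint H (-H)) (m : ℕ) :
    #{Y ∈ (H ∪ -H).powersetCard m | Disjoint Y (-Y)} = (#H).choose m * 2 ^ m := by
  have hdisj {T : Finset α} (hTH : T ⊆ H) : Disjoint T (-T) := hH.mono hTH (neg_subset_neg hTH)
  calc #{Y ∈ (H ∪ -H).powersetCard m | Disjoint Y (-Y)}
    _ = #((H.powersetCard m).sigma fun T => T.powerset) := by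
      refine card_nbij' (fun Y => ⟨H ∩ (Y ∪ -Y), H ∩ Y⟩) (fun p => negOutside p.1 p.2) ?_ ?_ ?_ ?_
        <;> simp only [mem_coe, mem_filter, mem_sigma, mem_powersetCard, mem_powerset, and_imp,
          Sigma.forall, Set.MapsTo, Set.LeftInvOn, Set.RightInvOn]
      · intro Y hYH hYm hYneg
        have hsub : H ∩ Y ⊆ H ∩ (Y ∪ -Y) := inter_subset_inter_left subset_union_left
        refine ⟨⟨inter_subset_left, ?_⟩, hsub⟩
        rw [← card_negOutside (hdisj inter_subset_left) hsub,
          negOutside_inter_union_neg_inter hYH hYneg, hYm]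
      · intro T U hTH hTm hUT
        exact ⟨⟨negOutside_subset hTH hUT, (card_negOutside (hdisj hTH) hUT).trans hTm⟩,
          disjoint_neg_negOutside (hdisj hTH) hUT⟩
      · exact fun Y hYH _ hYneg => negOutside_inter_union_neg_inter hYH hYneg
      · intro T U hTH _ hUT
        rw [inter_negOutside hH hTH hUT, inter_negOutside_union_neg_negOutside hH hTH hUT]
    _ = ∑ T ∈ H.powersetCard m, 2 ^ m := by
      rw [card_sigma]
      exact sum_congr rfl fun T hT => by rw [card_powerset, (mem_powersetCard.1 hT).2]
    _ = (#H).choose m * 2 ^ m := by rw [sum_const, card_powersetCard, smul_eq_mul]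

theorem exists_disjoint_neg_union_neg_eq {S : Finset α} (hS : -S = S) (hfix : ∀ x ∈ S, -x ≠ x) :
    ∃ H, Disjoint H (-H) ∧ H ∪ -H = S := by
  -- Any linear order selects the smaller element of each pair `{x, -x}`.
  let r : α → α → Prop := WellOrderingRel
  refine ⟨{x ∈ S | r x (-x)}, ?_, ?_⟩
  · simp only [disjoint_neg_iff, mem_filter, neg_neg]
    exact fun x hx hx' => asymm_of r hx.2 hx'.2
  · ext x
    have hx : -x ∈ S ↔ x ∈ S := by rw [← mem_neg', hS]
    simp only [mem_union, mem_neg', mem_filter, neg_neg, hx, ← and_or_left, and_iff_left_iff_imp]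
    intro hxS
    exact (trichotomous_of r x (-x)).imp_right fun h => h.resolve_left (hfix x hxS).symm

theorem card_filter_disjoint_neg_powersetCard {S : Finset α} (hS : -S = S)
    (hfix : ∀ x ∈ S, -x ≠ x) (m : ℕ) :
    #{Y ∈ S.powersetCard m | Disjoint Y (-Y)} = (#S / 2).choose m * 2 ^ m := by
  obtain ⟨H, hH, rfl⟩ := exists_disjoint_neg_union_neg_eq hS hfix
  have hhalf : #(H ∪ -H) / 2 = #H := by
    rw [card_union_of_disjoint hH, card_neg]
    lia
  rw [hhalf, card_filter_disjoint_neg_powersetCard_union_neg hH]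

end AntipodalFree

section Cube

open scoped Pointwise

variable {k : ℕ}

theorem pmCube_eq_piFinset (k : ℕ) :
    pmCube k = Fintype.piFinset fun _ : Fin k => ({1, -1} : Finset ℝ) := by
  ext x
  simp only [pmCube, mem_image, mem_univ, true_and, Fintype.mem_piFinset, mem_insert, mem_singleton]
  constructor
  · rintro ⟨f, rfl⟩ i
    exact ite_eq_or_eq _ _ _
  · intro hx
    refine ⟨fun i => decide (x i = 1), funext fun i => ?_⟩
    grind

theorem mem_pmCube {x : Fin k → ℝ} : x ∈ pmCube k ↔ ∀ i, x i = 1 ∨ x i = -1 := by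
  simp only [pmCube_eq_piFinset, Fintype.mem_piFinset, mem_insert, mem_singleton]

theorem card_pmCube (k : ℕ) : #(pmCube k) = 2 ^ k := by
  rw [pmCube_eq_piFinset, Fintype.card_piFinset_const, card_pair (by norm_num)]

theorem mem_pmCubeStar {x : Fin k → ℝ} :
    x ∈ pmCubeStar k ↔ (∀ i, x i = 1 ∨ x i = -1) ∧ x ≠ -allOne k ∧ x ≠ allOne k := by
  simp only [pmCubeStar, Finset.mem_sdiff, mem_pmCube, mem_insert, mem_singleton, not_or, ne_eq]

theorem neg_pmCubeStar (k : ℕ) : -pmCubeStar k = pmCubeStar k := by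
  ext x
  simp only [mem_neg', mem_pmCubeStar, Pi.neg_apply, ne_eq, neg_eq_iff_eq_neg, neg_neg,
    or_comm (b := _ = (1 : ℝ)), and_comm (b := ¬x = -allOne k)]

theorem neg_ne_self_of_mem_pmCubeStar {x : Fin k → ℝ} (hx : x ∈ pmCubeStar k) : -x ≠ x := by
  obtain ⟨hsign, -, hne⟩ := mem_pmCubeStar.1 hx
  obtain ⟨i, -⟩ := Function.ne_iff.1 hne
  intro h
  have hi : -x i = x i := congrFun h i
  have hzero : x i = 0 := self_eq_neg.1 hi.symm
  rcases hsign i with hone | hone <;> norm_num [hzero] at hone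

theorem card_pmCubeStar (k : ℕ) : #(pmCubeStar k) = 2 ^ k - 2 := by
  have hsub : {-allOne k, allOne k} ⊆ pmCube k := by
    simp [insert_subset_iff, mem_pmCube, allOne]
  rw [pmCubeStar, card_sdiff_of_subset hsub, card_pmCube]
  rcases k with _ | k
  -- For `k = 0` the vectors `-𝟙` and `𝟙` coincide, and truncated subtraction gives `1 - 1 = 1 - 2`.
  · simp [Subsingleton.elim (-allOne 0) (allOne 0)]
  · have hne : -allOne (k + 1) ≠ allOne (k + 1) := fun h => by
      have h0 : (-1 : ℝ) = 1 := congrFun h 0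
      norm_num at h0
    rw [card_pair hne]

theorem noAntipodal_iff_disjoint_neg {Y : Finset (Fin k → ℝ)} :
    NoAntipodal Y ↔ Disjoint Y (-Y) :=
  disjoint_neg_iff.symm

theorem card_filter_noAntipodal_powersetCard_pmCubeStar (k m : ℕ) :
    #{Y ∈ (pmCubeStar k).powersetCard m | NoAntipodal Y} = (2 ^ (k - 1) - 1).choose m * 2 ^ m := by
  have hhalf : (2 ^ k - 2) / 2 = 2 ^ (k - 1) - 1 := by
    rcases k with _ | k
    · rfl
    · rw [pow_succ, Nat.add_sub_cancel]
      lia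
  simp only [noAntipodal_iff_disjoint_neg]
  rw [card_filter_disjoint_neg_powersetCard (neg_pmCubeStar k)
    fun _ => neg_ne_self_of_mem_pmCubeStar, card_pmCubeStar, hhalf]

end Cube

section LongEdge

section Convex

variable {𝕜 E : Type*} [Field 𝕜] [LinearOrder 𝕜] [IsStrictOrderedRing 𝕜] [AddCommGroup E]
  [Module 𝕜 E]

theorem zero_mem_segment_neg_self (x : E) : (0 : E) ∈ segment 𝕜 (-x) x := by
  simpa only [midpoint_neg_self] using midpoint_mem_segment (𝕜 := 𝕜) (-x) x

theorem zero_mem_convexHull_of_neg_mem {s : Set E} {x : E} (hx : x ∈ s) (hneg : -x ∈ s) :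
    (0 : E) ∈ convexHull 𝕜 s :=
  segment_subset_convexHull hneg hx (zero_mem_segment_neg_self x)

end Convex

variable {k : ℕ}

/-- The event `conv Y ∩ conv{-𝟙, 𝟙} = ∅` whose probability is `τ(k,m)`. -/
def MissesDiagonal (Y : Finset (Fin k → ℝ)) : Prop :=
  convexHull ℝ (Y : Set (Fin k → ℝ)) ∩ segment ℝ (-allOne k) (allOne k) = ∅

theorem MissesDiagonal.noAntipodal {Y : Finset (Fin k → ℝ)} (hY : MissesDiagonal Y) :
    NoAntipodal Y := by
  intro y hy hneg
  exact Set.eq_empty_iff_forall_notMem.1 hY 0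
    ⟨zero_mem_convexHull_of_neg_mem hy hneg, zero_mem_segment_neg_self _⟩

theorem tau_eq_card_div_card (k m : ℕ) :
    tau k m = #{Y ∈ (pmCubeStar k).powersetCard m | MissesDiagonal Y} /
      #((pmCubeStar k).powersetCard m) := by
  -- In `tau` the filter runs over subsets coerced to `Set`, through the `Finset` monad.
  unfold tau
  rw [bind_pure_comp, Finset.fmap_def, filter_image]
  congr 2
  exact card_image_of_injective _ SetLike.coe_injective

theorem alpha_eq_card_div_card (k m : ℕ) :
    alpha k m = #{Y ∈ (pmCubeStar k).powersetCard m | MissesDiagonal Y ∧ NoAntipodal Y} /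
      #{Y ∈ (pmCubeStar k).powersetCard m | NoAntipodal Y} :=
  rfl

end LongEdge

-- STATEMENT 5
theorem statement5 (k m : ℕ) (hm : m ≤ 2 ^ k - 2) :
    tau k m = (((2 ^ (k - 1) - 1).choose m * 2 ^ m : ℕ) : ℝ) /
        (((2 ^ k - 2).choose m : ℕ) : ℝ) * alpha k m := by
  rw [tau_eq_card_div_card, alpha_eq_card_div_card,
    ← card_filter_noAntipodal_powersetCard_pmCubeStar, ← card_pmCubeStar, ← card_powersetCard]
  exact card_filter_div_card_eq_mul_of_imp _ fun _ _ => MissesDiagonal.noAntipodal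

end
end
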